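/- arXiv:2309.02336 — 15 statements merged into one kernel-verified Lean document; each statement's English description precedes it below -/
import Mathlib

section
/- Let g ≥ 1 and let (P,Q,R) ∈ ℂ[x]³ satisfy the M_g constraints, and suppose the triplet is regular, i.e. 2p₁ − q₁ + r₁ ≠ 0, where p₁, q₁, r₁ denote the coefficients of x in P, Q, R respectively. Set w := −(2p₁ − q₁ + r₁)/2, so w ≠ 0. Then the polynomial 2P − Q + R is divisible by x, and the polynomials P̃ := Q − P, Q̃ := (2P − Q + R)/(−w·x), R̃ := −w·x·Q again satisfy the M_g constraints and P̃² + Q̃·R̃ = P² + Q·R. Moreover, (w, P̃, Q̃, R̃) is the unique tuple with w ∈ ℂ∖{0} and (P̃,Q̃,R̃) satisfying the M_g constraints such that P̃ = Q − P, −w·x·Q̃ = 2P − Q + R and R̃ = −w·x·Q. -/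
/-- The `M_g` constraints on a triplet of complex polynomials:
`deg P ≤ g`, `deg Q ≤ g`, `deg R ≤ g+1`, `P(0) = 1`, `Q(0) = 2`, `R(0) = 0`. -/
def MgConstraints (g : ℕ) (P Q R : Polynomial ℂ) : Prop :=
  P.natDegree ≤ g ∧ Q.natDegree ≤ g ∧ R.natDegree ≤ g + 1 ∧
    P.eval 0 = 1 ∧ Q.eval 0 = 2 ∧ R.eval 0 = 0

theorem stmt0 (g : ℕ) (hg : 1 ≤ g) (P Q R : Polynomial ℂ)
    (hM : MgConstraints g P Q R)
    (hreg : 2 * P.coeff 1 - Q.coeff 1 + R.coeff 1 ≠ 0)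
    (w : ℂ) (hw : w = -(2 * P.coeff 1 - Q.coeff 1 + R.coeff 1) / 2)
    (Pt Qt Rt : Polynomial ℂ)
    (hPt : Pt = Q - P)
    (hQt : Qt = Polynomial.C (-w)⁻¹ * (2 * P - Q + R).divX)
    (hRt : Rt = Polynomial.C (-w) * Polynomial.X * Q) :
    w ≠ 0 ∧
    Polynomial.X ∣ (2 * P - Q + R) ∧
    Polynomial.C (-w) * Polynomial.X * Qt = 2 * P - Q + R ∧
    MgConstraints g Pt Qt Rt ∧
    Pt ^ 2 + Qt * Rt = P ^ 2 + Q * R ∧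
    (∀ w' : ℂ, ∀ P' Q' R' : Polynomial ℂ, w' ≠ 0 → MgConstraints g P' Q' R' →
      P' = Q - P →
      Polynomial.C (-w') * Polynomial.X * Q' = 2 * P - Q + R →
      R' = Polynomial.C (-w') * Polynomial.X * Q →
      w' = w ∧ P' = Pt ∧ Q' = Qt ∧ R' = Rt) := by
  obtain ⟨hP, hQ, hR, hP0, hQ0, hR0⟩ := hM
  have hw0 : w ≠ 0 := by
    rw [hw]
    exact div_ne_zero (neg_ne_zero.mpr hreg) two_ne_zero
  have h2 : (2 : Polynomial ℂ) = Polynomial.C 2 := (Polynomial.C_ofNat 2).symm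
  have hS1 : (2 * P - Q + R).coeff 1 = 2 * P.coeff 1 - Q.coeff 1 + R.coeff 1 := by
    rw [h2, Polynomial.coeff_add, Polynomial.coeff_sub, Polynomial.coeff_C_mul]
  have hSw : (2 * P - Q + R).coeff 1 = -w * 2 := by
    rw [hS1, hw]; ring
  have hS0 : (2 * P - Q + R).coeff 0 = 0 := by
    rw [Polynomial.coeff_zero_eq_eval_zero]
    simp [hP0, hQ0, hR0]
  have hSd : (2 * P - Q + R).natDegree ≤ g + 1 := by
    refine (Polynomial.natDegree_add_le _ _).trans (max_le ?_ hR)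
    refine (Polynomial.natDegree_sub_le _ _).trans (max_le ?_ (by omega))
    rw [h2]
    exact (Polynomial.natDegree_C_mul_le _ _).trans (by omega)
  have hdiv : Polynomial.X * (2 * P - Q + R).divX = 2 * P - Q + R := by
    have h := Polynomial.X_mul_divX_add (2 * P - Q + R)
    rwa [hS0, Polynomial.C_0, add_zero] at h
  have hCC : Polynomial.C (-w) * Polynomial.C (-w)⁻¹ = 1 := by
    rw [← Polynomial.C_mul, mul_inv_cancel₀ (neg_ne_zero.mpr hw0), Polynomial.C_1]
  have hXQ : Polynomial.C (-w) * Polynomial.X * Qt = 2 * P - Q + R := by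
    rw [hQt]
    calc _ = (Polynomial.C (-w) * Polynomial.C (-w)⁻¹) *
          (Polynomial.X * (2 * P - Q + R).divX) := by ring
      _ = _ := by rw [hCC, hdiv, one_mul]
  refine ⟨hw0, ⟨_, hdiv.symm⟩, hXQ, ⟨?_, ?_, ?_, ?_, ?_, ?_⟩, ?_, ?_⟩
  · rw [hPt]
    exact (Polynomial.natDegree_sub_le _ _).trans (max_le hQ hP)
  · rw [hQt]
    refine (Polynomial.natDegree_C_mul_le _ _).trans ?_
    rw [Polynomial.natDegree_divX_eq_natDegree_tsub_one]
    omega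
  · rw [hRt, mul_assoc]
    refine (Polynomial.natDegree_C_mul_le _ _).trans ?_
    refine Polynomial.natDegree_mul_le.trans ?_
    rw [Polynomial.natDegree_X]
    omega
  · rw [hPt, Polynomial.eval_sub, hP0, hQ0]; norm_num
  · rw [hQt, ← Polynomial.coeff_zero_eq_eval_zero, Polynomial.coeff_C_mul,
      Polynomial.coeff_divX, zero_add, hSw, inv_mul_cancel_left₀ (neg_ne_zero.mpr hw0)]
  · rw [hRt]; simp
  · rw [hPt, hRt]
    linear_combination Q * hXQ
  · intro w' P' Q' R' hw' hM' hP' hQ' hR'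
    obtain ⟨-, -, -, -, hQ0', -⟩ := hM'
    have hww : w' = w := by
      have h := congrArg (fun p => Polynomial.coeff p 1) hQ'
      simp only [hSw] at h
      rw [mul_assoc, Polynomial.coeff_C_mul, Polynomial.coeff_X_mul,
        Polynomial.coeff_zero_eq_eval_zero, hQ0'] at h
      linear_combination (-1 / 2) * h
    subst hww
    refine ⟨rfl, hP'.trans hPt.symm, ?_, hR'.trans hRt.symm⟩
    have hne : Polynomial.C (-w') * Polynomial.X ≠ 0 :=
      mul_ne_zero (Polynomial.C_ne_zero.mpr (neg_ne_zero.mpr hw0)) Polynomial.X_ne_zero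
    exact mul_left_cancel₀ hne (hQ'.trans hXQ.symm)
end

section
/- Let g ≥ 1 and let (P,Q,R) ∈ ℂ[x]³ satisfy the M_g constraints with 2p₁ − q₁ + r₁ ≠ 0 (p₁,q₁,r₁ the coefficients of x in P,Q,R), set w := −(2p₁ − q₁ + r₁)/2 and let (P̃,Q̃,R̃) be the image under the Volterra step. Then the 2×2 matrices over ℂ[x] given by L := [[P, R],[Q, −P]], L̃ := [[P̃, R̃],[Q̃, −P̃]] and M := [[1, −w·x],[1, 0]] satisfy the discrete Lax equation L·M = M·L̃; consequently det L̃ = det L, i.e. P̃² + Q̃·R̃ = P² + Q·R, so that all 2g+1 coefficients H₁,…,H_{2g+1} defined by P(x)² + Q(x)R(x) = 1 + Σ_{i=1}^{2g+1} H_i x^i are invariants of the Volterra step. -/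
theorem stmt1 (g : ℕ) (hg : 1 ≤ g) (P Q R : Polynomial ℂ)
    (hM : MgConstraints g P Q R)
    (hreg : 2 * P.coeff 1 - Q.coeff 1 + R.coeff 1 ≠ 0)
    (w : ℂ) (hw : w = -(2 * P.coeff 1 - Q.coeff 1 + R.coeff 1) / 2)
    (Pt Qt Rt : Polynomial ℂ)
    (hPt : Pt = Q - P)
    (hQt : Polynomial.C (-w) * Polynomial.X * Qt = 2 * P - Q + R)
    (hRt : Rt = Polynomial.C (-w) * Polynomial.X * Q) :
    -- the discrete Lax equation L · M = M · L̃
    (!![P, R; Q, -P] : Matrix (Fin 2) (Fin 2) (Polynomial ℂ)) *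
        !![1, Polynomial.C (-w) * Polynomial.X; 1, 0] =
      !![1, Polynomial.C (-w) * Polynomial.X; 1, 0] * !![Pt, Rt; Qt, -Pt] ∧
    -- consequently det L̃ = det L
    (!![Pt, Rt; Qt, -Pt] : Matrix (Fin 2) (Fin 2) (Polynomial ℂ)).det =
      (!![P, R; Q, -P] : Matrix (Fin 2) (Fin 2) (Polynomial ℂ)).det ∧
    -- i.e. P̃² + Q̃·R̃ = P² + Q·R
    Pt ^ 2 + Qt * Rt = P ^ 2 + Q * R ∧
    -- so the 2g+1 coefficients H₁,…,H_{2g+1} of P² + Q·R are invariant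
    (∀ i : ℕ, 1 ≤ i → i ≤ 2 * g + 1 →
      (Pt ^ 2 + Qt * Rt).coeff i = (P ^ 2 + Q * R).coeff i) := by
  have key : Pt ^ 2 + Qt * Rt = P ^ 2 + Q * R := by
    rw [hPt, hRt]
    linear_combination Q * hQt
  refine ⟨?_, ?_, key, fun i _ _ => by rw [key]⟩
  · subst hPt hRt
    generalize Polynomial.C (-w) * Polynomial.X = u at *
    rw [Matrix.mul_fin_two, Matrix.mul_fin_two]
    have h1 : P * 1 + R * 1 = 1 * (Q - P) + u * Qt := by linear_combination -hQt
    have h2 : P * u + R * 0 = 1 * (u * Q) + u * -(Q - P) := by ring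
    have h3 : Q * 1 + -P * 1 = 1 * (Q - P) + 0 * Qt := by ring
    have h4 : Q * u + -P * 0 = 1 * (u * Q) + 0 * -(Q - P) := by ring
    rw [h1, h2, h3, h4]
  · rw [Matrix.det_fin_two_of, Matrix.det_fin_two_of]
    linear_combination -key
end

section
/- Let a, b, ν ∈ ℂ and let τ : ℤ → ℂ with τ_n ≠ 0 for all n. Define w_n := τ_n τ_{n+3} / (τ_{n+1} τ_{n+2}). Then for each n ∈ ℤ, the sequence (w_m) satisfies the (P.iv) recurrence at index n if and only if τ satisfies at index n the homogeneous recurrence of order 7 and degree 8: τ_{n+7}τ_{n+4}²τ_{n+3}³τ_{n+2}² + τ_{n+6}²τ_{n+3}⁴τ_{n+2}² + 2τ_{n+6}τ_{n+5}²τ_{n+3}²τ_{n+2}³ + τ_{n+6}τ_{n+5}τ_{n+4}²τ_{n+3}²τ_{n+2}τ_{n+1} + τ_{n+5}⁴τ_{n+2}⁴ + 2τ_{n+5}³τ_{n+4}²τ_{n+2}²τ_{n+1} + τ_{n+5}²τ_{n+4}⁴τ_{n+1}² + τ_{n+5}²τ_{n+4}³τ_{n+3}²τ_n + ν(τ_{n+6}τ_{n+5}τ_{n+4}τ_{n+3}³τ_{n+2}²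 + τ_{n+5}³τ_{n+4}τ_{n+3}τ_{n+2}³ + τ_{n+5}²τ_{n+4}³τ_{n+3}τ_{n+2}τ_{n+1}) + b·τ_{n+5}²τ_{n+4}²τ_{n+3}²τ_{n+2}² + a·τ_{n+5}τ_{n+4}³τ_{n+3}³τ_{n+2} = 0. -/
theorem stmt2 (a b ν : ℂ) (τ : ℤ → ℂ) (hτ : ∀ n : ℤ, τ n ≠ 0)
    (w : ℤ → ℂ)
    (hw : ∀ m : ℤ, w m = τ m * τ (m + 3) / (τ (m + 1) * τ (m + 2)))
    (n : ℤ) :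
    (w (n + 4) * w (n + 3) * w (n + 2) + w (n + 2) * w (n + 1) * w n
        + 2 * w (n + 2) ^ 2 * (w (n + 3) + w (n + 1))
        + w (n + 2) * (w (n + 3) ^ 2 + w (n + 3) * w (n + 1) + w (n + 1) ^ 2)
        + w (n + 2) ^ 3
        + ν * w (n + 2) * (w (n + 3) + w (n + 2) + w (n + 1))
        + b * w (n + 2) + a = 0)
      ↔
    (τ (n + 7) * τ (n + 4) ^ 2 * τ (n + 3) ^ 3 * τ (n + 2) ^ 2
        + τ (n + 6) ^ 2 * τ (n + 3) ^ 4 * τ (n + 2) ^ 2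
        + 2 * τ (n + 6) * τ (n + 5) ^ 2 * τ (n + 3) ^ 2 * τ (n + 2) ^ 3
        + τ (n + 6) * τ (n + 5) * τ (n + 4) ^ 2 * τ (n + 3) ^ 2 * τ (n + 2) * τ (n + 1)
        + τ (n + 5) ^ 4 * τ (n + 2) ^ 4
        + 2 * τ (n + 5) ^ 3 * τ (n + 4) ^ 2 * τ (n + 2) ^ 2 * τ (n + 1)
        + τ (n + 5) ^ 2 * τ (n + 4) ^ 4 * τ (n + 1) ^ 2
        + τ (n + 5) ^ 2 * τ (n + 4) ^ 3 * τ (n + 3) ^ 2 * τ n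
        + ν * (τ (n + 6) * τ (n + 5) * τ (n + 4) * τ (n + 3) ^ 3 * τ (n + 2) ^ 2
            + τ (n + 5) ^ 3 * τ (n + 4) * τ (n + 3) * τ (n + 2) ^ 3
            + τ (n + 5) ^ 2 * τ (n + 4) ^ 3 * τ (n + 3) * τ (n + 2) * τ (n + 1))
        + b * τ (n + 5) ^ 2 * τ (n + 4) ^ 2 * τ (n + 3) ^ 2 * τ (n + 2) ^ 2
        + a * τ (n + 5) * τ (n + 4) ^ 3 * τ (n + 3) ^ 3 * τ (n + 2) = 0) := by
  have e0 := hw n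
  have e1 := hw (n + 1)
  have e2 := hw (n + 2)
  have e3 := hw (n + 3)
  have e4 := hw (n + 4)
  simp only [add_assoc] at e1 e2 e3 e4
  norm_num at e1 e2 e3 e4
  rw [e0, e1, e2, e3, e4]
  have h1 := hτ (n + 1)
  have h2 := hτ (n + 2)
  have h3 := hτ (n + 3)
  have h4 := hτ (n + 4)
  have h5 := hτ (n + 5)
  have h6 := hτ (n + 6)
  clear e0 e1 e2 e3 e4 hw hτ
  generalize τ n = t0 at *
  generalize τ (n + 1) = t1 at *
  generalize τ (n + 2) = t2 at *
  generalize τ (n + 3) = t3 at *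
  generalize τ (n + 4) = t4 at *
  generalize τ (n + 5) = t5 at *
  generalize τ (n + 6) = t6 at *
  generalize τ (n + 7) = t7 at *
  have hD : t5 * t4 ^ 3 * t3 ^ 3 * t2 ≠ 0 := by positivity
  rw [← mul_right_inj' hD, mul_zero]
  apply Eq.congr_left
  field_simp
  ring
end

section
/- Let a, b, ν ∈ ℂ, let τ : ℤ → ℂ with τ_n ≠ 0 for all n, set w_n := τ_n τ_{n+3} / (τ_{n+1} τ_{n+2}), and suppose (w_n) satisfies the (P.iv) recurrence for all n ∈ ℤ. Let k₁ := K₁(w₀,w₁,w₂,w₃) and k₂ := K₂(w₀,w₁,w₂,w₃). Then for all n ∈ ℤ the Somos-9 relation α₁τ_{n+9}τ_n + α₂τ_{n+8}τ_{n+1} + α₃τ_{n+7}τ_{n+2} + α₄τ_{n+6}τ_{n+3} + α₅τ_{n+5}τ_{n+4} = 0 holds, where α₁ = k₁, α₂ = a·k₂ − k₁², α₃ = a(a·k₂ − 2k₁²), α₄ = a(k₂² + ν·k₁k₂ + b·k₁² + a²k₁), α₅ = −k₁(k₂² + ν·k₁k₂ + b·k₁² + a²k₁). -/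
/-- The first integral `K₁` of the (P.iv) map. -/
noncomputable def K1 (a b ν w0 w1 w2 w3 : ℂ) : ℂ :=
  w1 * w2 * (w2 * w3 + w0 * w1 - w0 * w3 + (w1 + w2) ^ 2 + ν * (w1 + w2) + b)
    + a * (w1 + w2)

/-- The second first integral `K₂` of the (P.iv) map. -/
noncomputable def K2 (a b ν w0 w1 w2 w3 : ℂ) : ℂ :=
  w1 * w2 * (w0 ^ 2 * w1 + w3 ^ 2 * w2 + w0 * w3 * (w1 + w2)
      + w0 * (w2 ^ 2 + 2 * w1 ^ 2) + w3 * (w1 ^ 2 + 2 * w2 ^ 2)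
      + 3 * (w0 + w3) * w1 * w2 + (w1 + w2) ^ 3
      + ν * (w0 * w3 + (w0 + w3) * (w1 + w2) + (w1 + w2) ^ 2)
      + b * (w0 + w1 + w2 + w3))
    + a * (w0 * w1 + w3 * w2 + (w1 + w2) ^ 2)

theorem K1_inv (a b ν w0 w1 w2 w3 w4 : ℂ)
    (h : w4 * w3 * w2 + w2 * w1 * w0
        + 2 * w2 ^ 2 * (w3 + w1)
        + w2 * (w3 ^ 2 + w3 * w1 + w1 ^ 2)
        + w2 ^ 3
        + ν * w2 * (w3 + w2 + w1)
        + b * w2 + a = 0) :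
    K1 a b ν w1 w2 w3 w4 = K1 a b ν w0 w1 w2 w3 := by
  obtain rfl : a = -(w4 * w3 * w2 + w2 * w1 * w0
        + 2 * w2 ^ 2 * (w3 + w1)
        + w2 * (w3 ^ 2 + w3 * w1 + w1 ^ 2)
        + w2 ^ 3
        + ν * w2 * (w3 + w2 + w1)
        + b * w2) := by linear_combination h
  simp only [K1, K2]
  ring

theorem K2_inv (a b ν w0 w1 w2 w3 w4 : ℂ)
    (h : w4 * w3 * w2 + w2 * w1 * w0
        + 2 * w2 ^ 2 * (w3 + w1)
        + w2 * (w3 ^ 2 + w3 * w1 + w1 ^ 2)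
        + w2 ^ 3
        + ν * w2 * (w3 + w2 + w1)
        + b * w2 + a = 0) :
    K2 a b ν w1 w2 w3 w4 = K2 a b ν w0 w1 w2 w3 := by
  obtain rfl : a = -(w4 * w3 * w2 + w2 * w1 * w0
        + 2 * w2 ^ 2 * (w3 + w1)
        + w2 * (w3 ^ 2 + w3 * w1 + w1 ^ 2)
        + w2 ^ 3
        + ν * w2 * (w3 + w2 + w1)
        + b * w2) := by linear_combination h
  simp only [K1, K2]
  ring

theorem five (a b ν w0 w1 w2 w3 w4 : ℂ)
    (h : w4 * w3 * w2 + w2 * w1 * w0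
        + 2 * w2 ^ 2 * (w3 + w1)
        + w2 * (w3 ^ 2 + w3 * w1 + w1 ^ 2)
        + w2 ^ 3
        + ν * w2 * (w3 + w2 + w1)
        + b * w2 + a = 0) :
    w0 * w1 * w2 * w3 * w4 + a * w1 * w3 = K1 a b ν w0 w1 w2 w3 * (w1 + w2 + w3) - K2 a b ν w0 w1 w2 w3 := by
  obtain rfl : a = -(w4 * w3 * w2 + w2 * w1 * w0
        + 2 * w2 ^ 2 * (w3 + w1)
        + w2 * (w3 ^ 2 + w3 * w1 + w1 ^ 2)
        + w2 ^ 3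
        + ν * w2 * (w3 + w2 + w1)
        + b * w2) := by linear_combination h
  simp only [K1, K2]
  ring

theorem qrel (a b ν w0 w1 w2 w3 w4 : ℂ)
    (h : w4 * w3 * w2 + w2 * w1 * w0
        + 2 * w2 ^ 2 * (w3 + w1)
        + w2 * (w3 ^ 2 + w3 * w1 + w1 ^ 2)
        + w2 ^ 3
        + ν * w2 * (w3 + w2 + w1)
        + b * w2 + a = 0) :
    (K1 a b ν w0 w1 w2 w3 - a * w2) * (w0 * w4)
      + K1 a b ν w0 w1 w2 w3 * (w0 * (w2 + w3) + w4 * (w1 + w2) + w1 * w3 - b)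
      - K2 a b ν w0 w1 w2 w3 * (w0 + w1 + w2 + w3 + w4 + ν) - a ^ 2 = 0 := by
  obtain rfl : a = -(w4 * w3 * w2 + w2 * w1 * w0
        + 2 * w2 ^ 2 * (w3 + w1)
        + w2 * (w3 ^ 2 + w3 * w1 + w1 ^ 2)
        + w2 ^ 3
        + ν * w2 * (w3 + w2 + w1)
        + b * w2) := by linear_combination h
  simp only [K1, K2]
  ring

theorem stmt3 (a b ν : ℂ) (τ : ℤ → ℂ) (hτ : ∀ n : ℤ, τ n ≠ 0)
    (w : ℤ → ℂ)
    (hw : ∀ m : ℤ, w m = τ m * τ (m + 3) / (τ (m + 1) * τ (m + 2)))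
    (hpiv : ∀ n : ℤ,
      w (n + 4) * w (n + 3) * w (n + 2) + w (n + 2) * w (n + 1) * w n
        + 2 * w (n + 2) ^ 2 * (w (n + 3) + w (n + 1))
        + w (n + 2) * (w (n + 3) ^ 2 + w (n + 3) * w (n + 1) + w (n + 1) ^ 2)
        + w (n + 2) ^ 3
        + ν * w (n + 2) * (w (n + 3) + w (n + 2) + w (n + 1))
        + b * w (n + 2) + a = 0)
    (k1 k2 : ℂ)
    (hk1 : k1 = K1 a b ν (w 0) (w 1) (w 2) (w 3))
    (hk2 : k2 = K2 a b ν (w 0) (w 1) (w 2) (w 3)) :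
    ∀ n : ℤ,
      k1 * (τ (n + 9) * τ n)
        + (a * k2 - k1 ^ 2) * (τ (n + 8) * τ (n + 1))
        + (a * (a * k2 - 2 * k1 ^ 2)) * (τ (n + 7) * τ (n + 2))
        + (a * (k2 ^ 2 + ν * k1 * k2 + b * k1 ^ 2 + a ^ 2 * k1)) * (τ (n + 6) * τ (n + 3))
        + (-(k1 * (k2 ^ 2 + ν * k1 * k2 + b * k1 ^ 2 + a ^ 2 * k1))) * (τ (n + 5) * τ (n + 4))
        = 0 := by
  have inv : ∀ n : ℤ, K1 a b ν (w n) (w (n + 1)) (w (n + 2)) (w (n + 3)) = k1 ∧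
      K2 a b ν (w n) (w (n + 1)) (w (n + 2)) (w (n + 3)) = k2 := by
    have step : ∀ n : ℤ,
        K1 a b ν (w (n + 1)) (w (n + 1 + 1)) (w (n + 1 + 2)) (w (n + 1 + 3))
          = K1 a b ν (w n) (w (n + 1)) (w (n + 2)) (w (n + 3)) ∧
        K2 a b ν (w (n + 1)) (w (n + 1 + 1)) (w (n + 1 + 2)) (w (n + 1 + 3))
          = K2 a b ν (w n) (w (n + 1)) (w (n + 2)) (w (n + 3)) := by
      intro n
      have e1 : n + 1 + 1 = n + 2 := by ring
      have e2 : n + 1 + 2 = n + 3 := by ring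
      have e3 : n + 1 + 3 = n + 4 := by ring
      rw [e1, e2, e3]
      exact ⟨K1_inv _ _ _ _ _ _ _ _ (hpiv n), K2_inv _ _ _ _ _ _ _ _ (hpiv n)⟩
    intro n
    induction n using Int.induction_on with
    | zero => simp [hk1, hk2]
    | succ i ih => exact ⟨(step i).1.trans ih.1, (step i).2.trans ih.2⟩
    | pred i ih =>
      have s := step (-(i : ℤ) - 1)
      have e : -(i : ℤ) = -(i : ℤ) - 1 + 1 := by ring
      rw [e] at ih
      exact ⟨s.1.symm.trans ih.1, s.2.symm.trans ih.2⟩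
  have F : ∀ n : ℤ, w n * w (n + 1) * w (n + 2) * w (n + 3) * w (n + 4)
      + a * w (n + 1) * w (n + 3) = k1 * (w (n + 1) + w (n + 2) + w (n + 3)) - k2 := by
    intro n
    have := five _ _ _ _ _ _ _ _ (hpiv n)
    rwa [(inv n).1, (inv n).2] at this
  have Q : ∀ n : ℤ, (k1 - a * w (n + 2)) * (w n * w (n + 4))
      + k1 * (w n * (w (n + 2) + w (n + 3)) + w (n + 4) * (w (n + 1) + w (n + 2))
        + w (n + 1) * w (n + 3) - b)
      - k2 * (w n + w (n + 1) + w (n + 2) + w (n + 3) + w (n + 4) + ν) - a ^ 2 = 0 := by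
    intro n
    have := qrel _ _ _ _ _ _ _ _ (hpiv n)
    rwa [(inv n).1, (inv n).2] at this
  intro n
  have f0 := F n
  have f1 := F (n + 1)
  have f2 := F (n + 2)
  have q := Q (n + 1)
  have h0 := hw n
  have h1 := hw (n + 1)
  have h2 := hw (n + 2)
  have h3 := hw (n + 3)
  have h4 := hw (n + 4)
  have h5 := hw (n + 5)
  have h6 := hw (n + 6)
  simp only [add_assoc] at f0 f1 f2 q h0 h1 h2 h3 h4 h5 h6
  norm_num only at f0 f1 f2 q h0 h1 h2 h3 h4 h5 h6
  have t1 := hτ (n + 1)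
  have t2 := hτ (n + 2)
  have t3 := hτ (n + 3)
  have t4 := hτ (n + 4)
  have t5 := hτ (n + 5)
  have t6 := hτ (n + 6)
  have t7 := hτ (n + 7)
  have t8 := hτ (n + 8)
  have P1 : τ (n + 6) * τ (n + 3) = w (n + 3) * (τ (n + 5) * τ (n + 4)) := by
    rw [h3]; field_simp
  have P2 : τ (n + 7) * τ (n + 2)
      = w (n + 2) * w (n + 3) * w (n + 4) * (τ (n + 5) * τ (n + 4)) := by
    rw [h2, h3, h4]; field_simp
  have P3 : τ (n + 8) * τ (n + 1)
      = w (n + 1) * w (n + 2) * w (n + 3) ^ 2 * w (n + 4) * w (n + 5)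
        * (τ (n + 5) * τ (n + 4)) := by
    rw [h1, h2, h3, h4, h5]; field_simp
  have P4 : τ (n + 9) * τ n
      = (w n * w (n + 1) * w (n + 2) * w (n + 3) * w (n + 4))
        * (w (n + 2) * w (n + 3) * w (n + 4) * w (n + 5) * w (n + 6))
        * (τ (n + 5) * τ (n + 4)) := by
    rw [h0, h1, h2, h3, h4, h5, h6]; field_simp
  rw [P1, P2, P3, P4]
  clear P1 P2 P3 P4 h0 h1 h2 h3 h4 h5 h6 hw hpiv inv F Q hk1 hk2
  have f0' : w n * w (n + 1) * w (n + 2) * w (n + 3) * w (n + 4)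
      = k1 * (w (n + 1) + w (n + 2) + w (n + 3)) - k2 - a * w (n + 1) * w (n + 3) := by
    linear_combination f0
  have f2' : w (n + 2) * w (n + 3) * w (n + 4) * w (n + 5) * w (n + 6)
      = k1 * (w (n + 3) + w (n + 4) + w (n + 5)) - k2 - a * w (n + 3) * w (n + 5) := by
    linear_combination f2
  rw [f0', f2']
  linear_combination (τ (n + 5) * τ (n + 4)) * (k1 * (k1 - a * w (n + 3)) * q
    + (a * k2 - k1 ^ 2) * w (n + 3) * f1)
end

section
/- Let K be the field of fractions of the polynomial ring ℤ[a, b, ν, t₀, t₁, t₂, t₃, t₄, t₅, t₆] in 10 indeterminates. Then there exists a sequence τ : ℤ → K with τ_i = t_i for 0 ≤ i ≤ 6, with τ_n ≠ 0 for all n ∈ ℤ, satisfying for all n ∈ ℤ the recurrence τ_{n+7}τ_{n+4}²τ_{n+3}³τ_{n+2}² + τ_{n+6}²τ_{n+3}⁴τ_{n+2}² + 2τ_{n+6}τ_{n+5}²τ_{n+3}²τ_{n+2}³ + τ_{n+6}τ_{n+5}τ_{n+4}²τ_{n+3}²τ_{n+2}τ_{n+1} + τ_{n+5}⁴τ_{n+2}⁴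 + 2τ_{n+5}³τ_{n+4}²τ_{n+2}²τ_{n+1} + τ_{n+5}²τ_{n+4}⁴τ_{n+1}² + τ_{n+5}²τ_{n+4}³τ_{n+3}²τ_n + ν(τ_{n+6}τ_{n+5}τ_{n+4}τ_{n+3}³τ_{n+2}² + τ_{n+5}³τ_{n+4}τ_{n+3}τ_{n+2}³ + τ_{n+5}²τ_{n+4}³τ_{n+3}τ_{n+2}τ_{n+1}) + b·τ_{n+5}²τ_{n+4}²τ_{n+3}²τ_{n+2}² + a·τ_{n+5}τ_{n+4}³τ_{n+3}³τ_{n+2} = 0, and such that every τ_n lies in the subring ℤ[a, b, ν, t₀, t₁, t₂^{±1}, t₃^{±1}, t₄^{±1}, t₅, t₆] of K, i.e. the subring of K generated by a, b, ν, t₀, t₁, t₅, t₆ together with t₂, t₃, t₄ and their inverses (the Laurent property). -/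
noncomputable section

/-- The polynomial ring `ℤ[a, b, ν, t₀, t₁, t₂, t₃, t₄, t₅, t₆]` in 10 indeterminates. -/
abbrev PolyR : Type := MvPolynomial (Fin 10) ℤ

/-- Its field of fractions `K`. -/
abbrev FracK : Type := FractionRing PolyR

/-- The indeterminate `a` viewed in `K`. -/
def va : FracK := algebraMap PolyR FracK (MvPolynomial.X 0)

/-- The indeterminate `b` viewed in `K`. -/
def vb : FracK := algebraMap PolyR FracK (MvPolynomial.X 1)

/-- The indeterminate `ν` viewed in `K`. -/
def vnu : FracK := algebraMap PolyR FracK (MvPolynomial.X 2)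

/-- The indeterminates `t₀, …, t₆` viewed in `K`. -/
def tv (i : Fin 7) : FracK := algebraMap PolyR FracK (MvPolynomial.X ⟨i.1 + 3, by omega⟩)

open MvPolynomial in
/-- images of the indeterminates -/
def vv (i : Fin 10) : FracK := algebraMap PolyR FracK (MvPolynomial.X i)

def evf (f : Fin 10 → FracK) : PolyR →+* FracK :=
  MvPolynomial.eval₂Hom (Int.castRingHom FracK) f

theorem evf_X (f : Fin 10 → FracK) (i : Fin 10) : evf f (MvPolynomial.X i) = f i := by
  simp [evf]

theorem vv_ne (i : Fin 10) : vv i ≠ 0 := by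
  unfold vv
  intro h
  have := (IsFractionRing.injective PolyR FracK) (h.trans (map_zero _).symm)
  exact MvPolynomial.X_ne_zero i this

theorem inj_aux (f : Fin 10 → FracK) (s : PolyR)
    (h : ∀ i, ∃ k N, f i * algebraMap PolyR FracK s ^ k = algebraMap PolyR FracK N ∧
      vv i * evf f s ^ k = evf f N) (p : PolyR) :
    ∃ k N, evf f p * algebraMap PolyR FracK s ^ k = algebraMap PolyR FracK N ∧
      algebraMap PolyR FracK p * evf f s ^ k = evf f N := by
  induction p using MvPolynomial.induction_on with
  | C n => exact ⟨0, MvPolynomial.C n, by simp [evf], by simp [evf]⟩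
  | add p q hp hq =>
    obtain ⟨k, N, h1, h2⟩ := hp
    obtain ⟨j, M, h3, h4⟩ := hq
    refine ⟨k + j, N * s ^ j + M * s ^ k, ?_, ?_⟩
    · simp only [map_add, map_mul, map_pow, ← h1, ← h3]; ring
    · simp only [map_add, map_mul, map_pow, ← h2, ← h4]; ring
  | mul_X p i hp =>
    obtain ⟨k, N, h1, h2⟩ := hp
    obtain ⟨j, M, h3, h4⟩ := h i
    refine ⟨k + j, N * M, ?_, ?_⟩
    · rw [map_mul, map_mul, evf_X, ← h1, ← h3]; ring
    · rw [map_mul, map_mul, ← h2, ← h4]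
      change algebraMap PolyR FracK p * vv i * _ = _
      ring

theorem exists_invol (f : Fin 10 → FracK) (s : PolyR) (hs : evf f s ≠ 0)
    (h : ∀ i, ∃ k N, f i * algebraMap PolyR FracK s ^ k = algebraMap PolyR FracK N ∧
      vv i * evf f s ^ k = evf f N) :
    ∃ σ : FracK ≃+* FracK, (∀ i, σ (vv i) = f i) ∧ ∀ x, σ (σ x) = x := by
  have hinj : Function.Injective (evf f) := by
    rw [injective_iff_map_eq_zero]
    intro p hp
    obtain ⟨k, N, h1, h2⟩ := inj_aux f s h p
    rw [hp, zero_mul] at h1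
    have hN : N = 0 := (IsFractionRing.injective PolyR FracK) (h1.symm.trans (map_zero _).symm)
    rw [hN, map_zero] at h2
    have h5 := (mul_eq_zero.mp h2).resolve_right (pow_ne_zero _ hs)
    exact (IsFractionRing.injective PolyR FracK) (h5.trans (map_zero _).symm)
  let σ : FracK →+* FracK := IsFractionRing.lift hinj
  have hσ : ∀ p, σ (algebraMap PolyR FracK p) = evf f p := fun p =>
    IsFractionRing.lift_algebraMap hinj p
  have hσv : ∀ i, σ (vv i) = f i := fun i => by
    unfold vv; rw [hσ, evf_X]
  have hσf : ∀ i, σ (f i) = vv i := fun i => by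
    obtain ⟨k, N, h1, h2⟩ := h i
    have h3 := congrArg σ h1
    rw [map_mul, map_pow, hσ, hσ, ← h2] at h3
    exact mul_right_cancel₀ (pow_ne_zero _ hs) h3
  have hcomp : σ.comp σ = RingHom.id FracK := by
    apply IsFractionRing.ringHom_ext (A := PolyR)
    intro x
    have : ((σ.comp σ).comp (algebraMap PolyR FracK)) = ((RingHom.id FracK).comp (algebraMap PolyR FracK)) := by
      apply MvPolynomial.ringHom_ext
      · intro r; simp
      · intro i
        change σ (σ (vv i)) = vv i
        rw [hσv, hσf]
    exact RingHom.congr_fun this x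
  have hh : ∀ x, σ (σ x) = x := fun x => RingHom.congr_fun hcomp x
  exact ⟨RingEquiv.ofRingHom σ σ hcomp hcomp, hσv, hh⟩

/-- The recurrence polynomial. -/
def EE {R : Type*} [CommRing R] (a b c x0 x1 x2 x3 x4 x5 x6 x7 : R) : R :=
  x7 * x4 ^ 2 * x3 ^ 3 * x2 ^ 2
          + x6 ^ 2 * x3 ^ 4 * x2 ^ 2
          + 2 * x6 * x5 ^ 2 * x3 ^ 2 * x2 ^ 3
          + x6 * x5 * x4 ^ 2 * x3 ^ 2 * x2 * x1
          + x5 ^ 4 * x2 ^ 4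
          + 2 * x5 ^ 3 * x4 ^ 2 * x2 ^ 2 * x1
          + x5 ^ 2 * x4 ^ 4 * x1 ^ 2
          + x5 ^ 2 * x4 ^ 3 * x3 ^ 2 * x0
          + c * (x6 * x5 * x4 * x3 ^ 3 * x2 ^ 2
              + x5 ^ 3 * x4 * x3 * x2 ^ 3
              + x5 ^ 2 * x4 ^ 3 * x3 * x2 * x1)
          + b * x5 ^ 2 * x4 ^ 2 * x3 ^ 2 * x2 ^ 2
          + a * x5 * x4 ^ 3 * x3 ^ 3 * x2

theorem EE_map {R S : Type*} [CommRing R] [CommRing S] (f : R →+* S)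
    (a b c x0 x1 x2 x3 x4 x5 x6 x7 : R) :
    f (EE a b c x0 x1 x2 x3 x4 x5 x6 x7) =
      EE (f a) (f b) (f c) (f x0) (f x1) (f x2) (f x3) (f x4) (f x5) (f x6) (f x7) := by
  simp only [EE, map_add, map_mul, map_pow, map_ofNat]

theorem EE_rev {R : Type*} [CommRing R] (a b c x0 x1 x2 x3 x4 x5 x6 x7 : R) :
    EE a b c x7 x6 x5 x4 x3 x2 x1 x0 = EE a b c x0 x1 x2 x3 x4 x5 x6 x7 := by
  unfold EE; ring

theorem EE_zero {R : Type*} [CommRing R] (a b c x0 x1 x2 x3 x4 x5 x6 x7 : R) :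
    EE a b c x0 x1 x2 x3 x4 x5 x6 x7 =
      x0 * (x5 ^ 2 * x4 ^ 3 * x3 ^ 2) + EE a b c 0 x1 x2 x3 x4 x5 x6 x7 := by
  unfold EE; ring

/-- Abstract existence of the solution with its symmetries. -/
theorem exists_sys : ∃ ρ Φ : FracK ≃+* FracK,
    (ρ (vv 0) = vv 0 ∧ ρ (vv 1) = vv 1 ∧ ρ (vv 2) = vv 2 ∧ ρ (vv 3) = vv 9 ∧ ρ (vv 4) = vv 8 ∧
      ρ (vv 5) = vv 7 ∧ ρ (vv 6) = vv 6 ∧ ρ (vv 7) = vv 5 ∧ ρ (vv 8) = vv 4 ∧ ρ (vv 9) = vv 3) ∧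
    (Φ (vv 0) = vv 0 ∧ Φ (vv 1) = vv 1 ∧ Φ (vv 2) = vv 2 ∧ Φ (vv 3) = vv 4 ∧ Φ (vv 4) = vv 5 ∧
      Φ (vv 5) = vv 6 ∧ Φ (vv 6) = vv 7 ∧ Φ (vv 7) = vv 8 ∧ Φ (vv 8) = vv 9) ∧
    EE (vv 0) (vv 1) (vv 2) (vv 3) (vv 4) (vv 5) (vv 6) (vv 7) (vv 8) (vv 9) (Φ (vv 9)) = 0 ∧
    (∀ x, Φ (ρ (Φ x)) = ρ x) := by
  obtain ⟨ρ, hρ, hρρ⟩ := exists_invol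
    ![vv 0, vv 1, vv 2, vv 9, vv 8, vv 7, vv 6, vv 5, vv 4, vv 3] 1 (by simp) (by
      intro i
      refine ⟨0, ![.X 0, .X 1, .X 2, .X 9, .X 8, .X 7, .X 6, .X 5, .X 4, .X 3] i, ?_⟩
      fin_cases i <;> simp [evf_X] <;> rfl)
  let D : PolyR := .X 7 ^ 2 * .X 6 ^ 3 * .X 5 ^ 2
  let N : PolyR := - EE (.X 0) (.X 1) (.X 2) 0 (.X 3) (.X 4) (.X 5) (.X 6) (.X 7) (.X 8) (.X 9)
  let y : FracK := algebraMap PolyR FracK N / algebraMap PolyR FracK D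
  have hD : algebraMap PolyR FracK D = vv 7 ^ 2 * vv 6 ^ 3 * vv 5 ^ 2 := by
    simp only [D, map_mul, map_pow]; rfl
  have hD0 : algebraMap PolyR FracK D ≠ 0 := by
    rw [hD]
    exact mul_ne_zero (mul_ne_zero (pow_ne_zero _ (vv_ne _)) (pow_ne_zero _ (vv_ne _)))
      (pow_ne_zero _ (vv_ne _))
  have hyD : y * algebraMap PolyR FracK D = algebraMap PolyR FracK N := div_mul_cancel₀ _ hD0
  have hE : EE (vv 0) (vv 1) (vv 2) y (vv 3) (vv 4) (vv 5) (vv 6) (vv 7) (vv 8) (vv 9) = 0 := by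
    rw [EE_zero, ← hD, hyD]
    simp only [N, map_neg, EE_map, map_zero]
    exact neg_add_cancel _
  let g : Fin 10 → FracK := ![vv 0, vv 1, vv 2, vv 8, vv 7, vv 6, vv 5, vv 4, vv 3, y]
  have hgD : evf g D = vv 4 ^ 2 * vv 5 ^ 3 * vv 6 ^ 2 := by
    simp only [D, map_mul, map_pow, evf_X]; rfl
  have hgN : evf g N = vv 9 * (vv 4 ^ 2 * vv 5 ^ 3 * vv 6 ^ 2) := by
    have h1 : evf g N =
        - EE (vv 0) (vv 1) (vv 2) 0 (vv 8) (vv 7) (vv 6) (vv 5) (vv 4) (vv 3) y := by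
      simp only [N, map_neg, EE_map, map_zero, evf_X]; rfl
    rw [← EE_rev, EE_zero] at hE
    rw [h1]
    exact neg_eq_of_add_eq_zero_left hE
  obtain ⟨σ, hσ, hσσ⟩ := exists_invol g D (by
      rw [hgD]
      exact mul_ne_zero (mul_ne_zero (pow_ne_zero _ (vv_ne _)) (pow_ne_zero _ (vv_ne _)))
        (pow_ne_zero _ (vv_ne _))) (by
      intro i
      by_cases hi : i = 9
      · subst hi
        refine ⟨1, N, ?_, ?_⟩
        · rw [pow_one]; exact hyD
        · rw [pow_one, hgN, hgD]
      · refine ⟨0, ![.X 0, .X 1, .X 2, .X 8, .X 7, .X 6, .X 5, .X 4, .X 3, 0] i, ?_⟩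
        fin_cases i <;> first | exact absurd rfl hi | (simp [evf_X, g]; try rfl))
  refine ⟨ρ, σ.trans ρ, ⟨hρ 0, hρ 1, hρ 2, hρ 3, hρ 4, hρ 5, hρ 6, hρ 7, hρ 8, hρ 9⟩, ?_, ?_, ?_⟩
  · simp only [RingEquiv.trans_apply, hσ]
    exact ⟨hρ 0, hρ 1, hρ 2, hρ 8, hρ 7, hρ 6, hρ 5, hρ 4, hρ 3⟩
  · have h1 := congrArg ρ.toRingHom hE
    rw [EE_map, map_zero, ← EE_rev] at h1
    have h9 : σ (vv 9) = y := hσ 9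
    simp only [RingEquiv.trans_apply, h9]
    have e : ∀ x, ρ.toRingHom x = ρ x := fun _ => rfl
    simp only [e, hρ] at h1
    exact h1
  · intro x
    simp only [RingEquiv.trans_apply, hρρ, hσσ]

/-- Numerator of the auxiliary quantity `P`. -/
def NP {R : Type*} [CommRing R] (a b c t0 t1 t2 t3 t4 t5 t6 : R) : R :=
  -(2 * t6 * t5 * t3 ^ 2 * t2 ^ 3 + t6 * t4 ^ 2 * t3 ^ 2 * t2 * t1 + t5 ^ 3 * t2 ^ 4
    + 2 * t5 ^ 2 * t4 ^ 2 * t2 ^ 2 * t1 + t5 * t4 ^ 4 * t1 ^ 2 + t5 * t4 ^ 3 * t3 ^ 2 * t0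
    + c * (t6 * t4 * t3 ^ 3 * t2 ^ 2 + t5 ^ 2 * t4 * t3 * t2 ^ 3 + t5 * t4 ^ 3 * t3 * t2 * t1)
    + b * t5 * t4 ^ 2 * t3 ^ 2 * t2 ^ 2 + a * t4 ^ 3 * t3 ^ 3 * t2)

def N7 {R : Type*} [CommRing R] (a b c t0 t1 t2 t3 t4 t5 t6 : R) : R :=
  t5 * NP a b c t0 t1 t2 t3 t4 t5 t6 - t6 ^ 2 * t3 ^ 4 * t2 ^ 2

def N8 {R : Type*} [CommRing R] (a b c t0 t1 t2 t3 t4 t5 t6 : R) : R :=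
  -(t3 ^ 2 * NP a b c t0 t1 t2 t3 t4 t5 t6 ^ 2
    + N7 a b c t0 t1 t2 t3 t4 t5 t6 * t6 * t3 ^ 4 * t2 ^ 3
    + (2 * t6 ^ 3 * t3 ^ 2 * t2 + t6 ^ 2 * t5 ^ 2 * t2 ^ 2 + t6 ^ 2 * t5 * t4 ^ 2 * t1
      + c * t6 ^ 2 * t5 * t4 * t3 * t2 + b * t6 ^ 2 * t4 ^ 2 * t3 ^ 2
      + a * t6 * t5 * t4 ^ 3 * t3) * t3 ^ 6 * t2 ^ 4
    + c * t6 * t4 * t3 ^ 5 * t2 ^ 2 * NP a b c t0 t1 t2 t3 t4 t5 t6)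

def WW {R : Type*} [CommRing R] (b c t0 t1 t2 t3 t4 t5 t6 : R) : R :=
  2 * t6 * t3 ^ 2 * t2 ^ 3 + t5 ^ 2 * t2 ^ 4 + 2 * t5 * t4 ^ 2 * t2 ^ 2 * t1
    + t4 ^ 4 * t1 ^ 2 + t4 ^ 3 * t3 ^ 2 * t0
    + c * (t5 * t4 * t3 * t2 ^ 3 + t4 ^ 3 * t3 * t2 * t1) + b * t4 ^ 2 * t3 ^ 2 * t2 ^ 2

theorem NP_map {R S : Type*} [CommRing R] [CommRing S] (f : R →+* S)
    (a b c t0 t1 t2 t3 t4 t5 t6 : R) : f (NP a b c t0 t1 t2 t3 t4 t5 t6) =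
      NP (f a) (f b) (f c) (f t0) (f t1) (f t2) (f t3) (f t4) (f t5) (f t6) := by
  simp only [NP, map_add, map_mul, map_pow, map_ofNat, map_neg]

theorem N7_map {R S : Type*} [CommRing R] [CommRing S] (f : R →+* S)
    (a b c t0 t1 t2 t3 t4 t5 t6 : R) : f (N7 a b c t0 t1 t2 t3 t4 t5 t6) =
      N7 (f a) (f b) (f c) (f t0) (f t1) (f t2) (f t3) (f t4) (f t5) (f t6) := by
  simp only [N7, map_sub, map_mul, map_pow, NP_map]

theorem N8_map {R S : Type*} [CommRing R] [CommRing S] (f : R →+* S)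
    (a b c t0 t1 t2 t3 t4 t5 t6 : R) : f (N8 a b c t0 t1 t2 t3 t4 t5 t6) =
      N8 (f a) (f b) (f c) (f t0) (f t1) (f t2) (f t3) (f t4) (f t5) (f t6) := by
  simp only [N8, map_add, map_mul, map_pow, NP_map, N7_map, map_ofNat, map_neg]

theorem alg7 {F : Type*} [Field F] {a b c t0 t1 t2 t3 t4 t5 t6 t7 : F}
    (h : EE a b c t0 t1 t2 t3 t4 t5 t6 t7 = 0) :
    t7 * (t4 ^ 2 * t3 ^ 3 * t2 ^ 2) = N7 a b c t0 t1 t2 t3 t4 t5 t6 := by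
  unfold EE at h; unfold N7 NP
  linear_combination h

theorem algS {F : Type*} [Field F] {a b c t0 t1 t2 t3 t4 t5 t6 t7 P : F}
    (h2 : t2 ≠ 0) (h3 : t3 ≠ 0)
    (h : EE a b c t0 t1 t2 t3 t4 t5 t6 t7 = 0)
    (hP : P * (t3 ^ 3 * t2 ^ 2) = NP a b c t0 t1 t2 t3 t4 t5 t6) :
    t7 * t4 ^ 2 + t6 ^ 2 * t3 = t5 * P := by
  have h7 := alg7 h
  unfold N7 at h7
  rw [← hP] at h7
  have : t3 ^ 3 * t2 ^ 2 ≠ 0 := mul_ne_zero (pow_ne_zero _ h3) (by simpa using h2)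
  apply mul_right_cancel₀ this
  linear_combination h7

theorem alg8 {F : Type*} [Field F] {a b c t1 t2 t3 t4 t5 t6 t7 t8 P : F}
    (h5 : t5 ≠ 0) (h : EE a b c t1 t2 t3 t4 t5 t6 t7 t8 = 0)
    (hS : t7 * t4 ^ 2 + t6 ^ 2 * t3 = t5 * P) :
    t8 * (t4 ^ 3 * t3 ^ 2) = -(t3 ^ 2 * P ^ 2 + t7 * t6 * t4 ^ 2 * t3 * t2
      + 2 * t6 ^ 3 * t3 ^ 2 * t2 + t6 ^ 2 * t5 ^ 2 * t2 ^ 2 + t6 ^ 2 * t5 * t4 ^ 2 * t1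
      + c * (t6 * t4 * t3 ^ 2 * P + t6 ^ 2 * t5 * t4 * t3 * t2)
      + b * t6 ^ 2 * t4 ^ 2 * t3 ^ 2 + a * t6 * t5 * t4 ^ 3 * t3) := by
  have : t5 ^ 2 ≠ 0 := pow_ne_zero _ h5
  apply mul_right_cancel₀ this
  unfold EE at h
  linear_combination h - (t3 ^ 2 * (t7 * t4 ^ 2 + t6 ^ 2 * t3 + t5 * P)
    + c * t6 * t5 * t4 * t3 ^ 2) * hS

theorem alg8' {F : Type*} [Field F] {a b c t0 t1 t2 t3 t4 t5 t6 t7 t8 P : F}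
    (h8 : t8 * (t4 ^ 3 * t3 ^ 2) = -(t3 ^ 2 * P ^ 2 + t7 * t6 * t4 ^ 2 * t3 * t2
      + 2 * t6 ^ 3 * t3 ^ 2 * t2 + t6 ^ 2 * t5 ^ 2 * t2 ^ 2 + t6 ^ 2 * t5 * t4 ^ 2 * t1
      + c * (t6 * t4 * t3 ^ 2 * P + t6 ^ 2 * t5 * t4 * t3 * t2)
      + b * t6 ^ 2 * t4 ^ 2 * t3 ^ 2 + a * t6 * t5 * t4 ^ 3 * t3))
    (hP : P * (t3 ^ 3 * t2 ^ 2) = NP a b c t0 t1 t2 t3 t4 t5 t6)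
    (h7 : t7 * (t4 ^ 2 * t3 ^ 3 * t2 ^ 2) = N7 a b c t0 t1 t2 t3 t4 t5 t6) :
    t8 * (t4 ^ 3 * t3 ^ 8 * t2 ^ 4) = N8 a b c t0 t1 t2 t3 t4 t5 t6 := by
  unfold N8
  rw [← h7, ← hP]
  linear_combination (t3 ^ 6 * t2 ^ 4) * h8

theorem algQ {F : Type*} [Field F] {a b c t0 t1 t2 t3 t4 t5 t6 t7 t8 P Q : F}
    (h2 : t2 ≠ 0) (h3 : t3 ≠ 0)
    (h8 : t8 * (t4 ^ 3 * t3 ^ 2) = -(t3 ^ 2 * P ^ 2 + t7 * t6 * t4 ^ 2 * t3 * t2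
      + 2 * t6 ^ 3 * t3 ^ 2 * t2 + t6 ^ 2 * t5 ^ 2 * t2 ^ 2 + t6 ^ 2 * t5 * t4 ^ 2 * t1
      + c * (t6 * t4 * t3 ^ 2 * P + t6 ^ 2 * t5 * t4 * t3 * t2)
      + b * t6 ^ 2 * t4 ^ 2 * t3 ^ 2 + a * t6 * t5 * t4 ^ 3 * t3))
    (hP : P * (t3 ^ 3 * t2 ^ 2) = NP a b c t0 t1 t2 t3 t4 t5 t6)
    (hS : t7 * t4 ^ 2 + t6 ^ 2 * t3 = t5 * P)
    (hQ : Q * (t3 ^ 4 * t2) = -t6 * (t6 * t2 ^ 3 * t3 ^ 2 - WW b c t0 t1 t2 t3 t4 t5 t6)) :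
    t8 * t4 ^ 3 + P ^ 2 + t6 ^ 3 * t2 + c * t6 * t4 * P + b * t6 ^ 2 * t4 ^ 2
      = t5 ^ 2 * Q := by
  have : t3 ^ 4 * t2 ≠ 0 := mul_ne_zero (pow_ne_zero _ h3) (by simpa using h2)
  apply mul_right_cancel₀ this
  unfold NP at hP; unfold WW at hQ
  linear_combination (t3 ^ 2 * t2) * h8 - t5 ^ 2 * hQ - t5 * t6 * hP - t6 * t3 ^ 3 * t2 ^ 2 * hS

theorem alg9 {F : Type*} [Field F] {a b c t2 t3 t4 t5 t6 t7 t8 t9 P Q : F}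
    (h5 : t5 ≠ 0) (h : EE a b c t2 t3 t4 t5 t6 t7 t8 t9 = 0)
    (hS : t7 * t4 ^ 2 + t6 ^ 2 * t3 = t5 * P)
    (hQ : t8 * t4 ^ 3 + P ^ 2 + t6 ^ 3 * t2 + c * t6 * t4 * P + b * t6 ^ 2 * t4 ^ 2
      = t5 ^ 2 * Q) :
    t9 * (t6 ^ 2 * t4 ^ 2) = -(t8 ^ 2 * t5 * t4 ^ 2 + t8 * t7 * t4 * P + t7 ^ 2 * (t5 * Q)
      + c * t8 * t7 * t6 * t4 ^ 2 + a * t7 * t6 ^ 3 * t4) := by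
  have : t5 ^ 3 ≠ 0 := pow_ne_zero _ h5
  apply mul_right_cancel₀ this
  unfold EE at h
  linear_combination h - (t7 ^ 2 * (t7 * t4 ^ 2 + t6 ^ 2 * t3 + t5 * P)
    + c * t7 ^ 2 * t6 * t5 * t4 + t8 * t7 * t5 ^ 2 * t4) * hS - t7 ^ 2 * t5 ^ 2 * hQ

theorem alg10 {F : Type*} [Field F] {a b c t3 t4 t5 t6 t7 t8 t9 t10 P Q : F}
    (h4 : t4 ≠ 0) (h5 : t5 ≠ 0) (h : EE a b c t3 t4 t5 t6 t7 t8 t9 t10 = 0)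
    (hS : t7 * t4 ^ 2 + t6 ^ 2 * t3 = t5 * P)
    (h9 : t9 * (t6 ^ 2 * t4 ^ 2) = -(t8 ^ 2 * t5 * t4 ^ 2 + t8 * t7 * t4 * P + t7 ^ 2 * (t5 * Q)
      + c * t8 * t7 * t6 * t4 ^ 2 + a * t7 * t6 ^ 3 * t4)) :
    t10 * (t7 ^ 2 * t6 ^ 3 * t4) = -((t9 ^ 2 * t6 ^ 4 + 2 * t9 * t8 ^ 2 * t6 ^ 2 * t5
      + t8 ^ 4 * t5 ^ 2 + 2 * t8 ^ 3 * t7 ^ 2 * t4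
      + c * (t9 * t8 * t7 * t6 ^ 3 + t8 ^ 3 * t7 * t6 * t5) + b * t8 ^ 2 * t7 ^ 2 * t6 ^ 2) * t4
      - t8 * t7 ^ 2 * (t8 ^ 2 * t4 ^ 2 + t7 ^ 2 * Q)) := by
  have : t5 ^ 2 * t4 ≠ 0 := mul_ne_zero (pow_ne_zero _ h5) h4
  apply mul_right_cancel₀ this
  unfold EE at h
  linear_combination t4 ^ 2 * h - t8 ^ 2 * t7 ^ 3 * t4 ^ 2 * hS - t8 * t7 ^ 2 * t5 * t4 * h9

/-- Elements of `K` of the form `p / s ^ k`. -/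
def Loc (s : PolyR) : Subring FracK where
  carrier := {x | ∃ (k : ℕ) (p : PolyR),
    x * algebraMap PolyR FracK s ^ k = algebraMap PolyR FracK p}
  mul_mem' := by
    rintro x y ⟨k, p, h⟩ ⟨j, q, h'⟩
    exact ⟨k + j, p * q, by rw [map_mul, ← h, ← h']; ring⟩
  one_mem' := ⟨0, 1, by simp⟩
  add_mem' := by
    rintro x y ⟨k, p, h⟩ ⟨j, q, h'⟩
    exact ⟨k + j, p * s ^ j + q * s ^ k, by
      simp only [map_add, map_mul, map_pow, ← h, ← h']; ring⟩
  zero_mem' := ⟨0, 0, by simp⟩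
  neg_mem' := by
    rintro x ⟨k, p, h⟩
    exact ⟨k, -p, by rw [map_neg, ← h]; ring⟩

theorem alg_ne {p : PolyR} (h : p ≠ 0) : algebraMap PolyR FracK p ≠ 0 := fun h' =>
  h ((IsFractionRing.injective PolyR FracK) (h'.trans (map_zero _).symm))

theorem alg_mem_Loc (s p : PolyR) : algebraMap PolyR FracK p ∈ Loc s := ⟨0, p, by simp⟩

theorem vv_mem_Loc (s : PolyR) (i : Fin 10) : vv i ∈ Loc s := alg_mem_Loc s _

theorem inv_mem_Loc {s r : PolyR} (hr : r ≠ 0) (h : r ∣ s) :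
    (algebraMap PolyR FracK r)⁻¹ ∈ Loc s := by
  obtain ⟨q, rfl⟩ := h
  refine ⟨1, q, ?_⟩
  rw [pow_one, map_mul, inv_mul_cancel_left₀ (alg_ne hr)]

theorem Loc_mono {s s' : PolyR} (h : s ∣ s') : Loc s ≤ Loc s' := by
  obtain ⟨q, rfl⟩ := h
  rintro x ⟨k, p, hx⟩
  exact ⟨k, p * q ^ k, by simp only [map_mul, map_pow, ← hx]; ring⟩

theorem Loc_inter {m q : PolyR} {i : Fin 10} (hm : ¬ (MvPolynomial.X i : PolyR) ∣ m)
    (hq : ¬ (MvPolynomial.X i : PolyR) ∣ q) {x : FracK}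
    (h1 : x ∈ Loc (m * MvPolynomial.X i)) (h2 : x ∈ Loc (m * q)) : x ∈ Loc m := by
  have hp : Prime (MvPolynomial.X i : PolyR) := MvPolynomial.X_prime
  obtain ⟨k, p, h1⟩ := h1
  obtain ⟨j, r, h2⟩ := h2
  have h3 : p * (m * q) ^ j = r * (m * MvPolynomial.X i) ^ k := by
    apply IsFractionRing.injective PolyR FracK
    simp only [map_mul, map_pow] at h1 h2 ⊢
    rw [← h1, ← h2]; ring
  have h4 : ¬ (MvPolynomial.X i : PolyR) ∣ (m * q) ^ j := fun h =>
    (hp.dvd_or_dvd (hp.dvd_of_dvd_pow h)).elim hm hq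
  have h5 : (MvPolynomial.X i : PolyR) ^ k ∣ p :=
    hp.pow_dvd_of_dvd_mul_right k h4 ⟨r * m ^ k, by rw [h3]; ring⟩
  obtain ⟨p', rfl⟩ := h5
  refine ⟨k, p', ?_⟩
  have h6 : algebraMap PolyR FracK (MvPolynomial.X i) ^ k ≠ 0 := pow_ne_zero _ (vv_ne i)
  apply mul_right_cancel₀ h6
  simp only [map_mul, map_pow] at h1
  linear_combination h1

theorem mem_of_mul {T : Subring FracK} {x d n : FracK} (h : x * d = n) (hd : d ≠ 0)
    (hi : d⁻¹ ∈ T) (hn : n ∈ T) : x ∈ T := by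
  have : x = n * d⁻¹ := by rw [← h, mul_inv_cancel_right₀ hd]
  rw [this]; exact T.mul_mem hn hi

/-- the Laurent subring -/
def LL : Subring FracK := Subring.closure
  {vv 0, vv 1, vv 2, vv 3, vv 4, vv 5, (vv 5)⁻¹, vv 6, (vv 6)⁻¹, vv 7, (vv 7)⁻¹, vv 8, vv 9}

def mm : PolyR := MvPolynomial.X 5 * MvPolynomial.X 6 * MvPolynomial.X 7

theorem i5 : (MvPolynomial.X 5 : PolyR) ∣ mm := ⟨MvPolynomial.X 6 * MvPolynomial.X 7, by unfold mm; ring⟩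
theorem i6 : (MvPolynomial.X 6 : PolyR) ∣ mm := ⟨MvPolynomial.X 5 * MvPolynomial.X 7, by unfold mm; ring⟩
theorem i7 : (MvPolynomial.X 7 : PolyR) ∣ mm := ⟨MvPolynomial.X 5 * MvPolynomial.X 6, by unfold mm; ring⟩

theorem vinv_mem {s : PolyR} {i : Fin 10} (h : (MvPolynomial.X i : PolyR) ∣ s) :
    (vv i)⁻¹ ∈ Loc s := inv_mem_Loc (MvPolynomial.X_ne_zero i) h

theorem map_LL_le (f : FracK →+* FracK) (T : Subring FracK)
    (h0 : f (vv 0) ∈ T) (h1 : f (vv 1) ∈ T) (h2 : f (vv 2) ∈ T) (h3 : f (vv 3) ∈ T)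
    (h4 : f (vv 4) ∈ T) (h5 : f (vv 5) ∈ T) (h5' : (f (vv 5))⁻¹ ∈ T)
    (h6 : f (vv 6) ∈ T) (h6' : (f (vv 6))⁻¹ ∈ T) (h7 : f (vv 7) ∈ T) (h7' : (f (vv 7))⁻¹ ∈ T)
    (h8 : f (vv 8) ∈ T) (h9 : f (vv 9) ∈ T) {x : FracK} (hx : x ∈ LL) : f x ∈ T := by
  have : LL ≤ T.comap f := by
    unfold LL
    rw [Subring.closure_le]
    rintro y hy
    simp only [Set.mem_insert_iff, Set.mem_singleton_iff] at hy
    rcases hy with rfl | rfl | rfl | rfl | rfl | rfl | rfl | rfl | rfl | rfl | rfl | rfl | rfl <;>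
      simp only [Subring.coe_comap, Set.mem_preimage, SetLike.mem_coe, map_inv₀] <;> assumption
  exact this hx

theorem vv_mem_LL (i : Fin 10) : vv i ∈ LL := by
  apply Subring.subset_closure
  fin_cases i <;> simp

theorem LL_eq : LL = Loc mm := by
  apply le_antisymm
  · intro x hx
    exact map_LL_le (RingHom.id _) (Loc mm) (vv_mem_Loc _ _) (vv_mem_Loc _ _) (vv_mem_Loc _ _)
      (vv_mem_Loc _ _) (vv_mem_Loc _ _) (vv_mem_Loc _ _) (vinv_mem i5) (vv_mem_Loc _ _)
      (vinv_mem i6) (vv_mem_Loc _ _) (vinv_mem i7) (vv_mem_Loc _ _) (vv_mem_Loc _ _) hx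
  · rintro x ⟨k, p, h⟩
    have hp : algebraMap PolyR FracK p ∈ LL := by
      clear h
      induction p using MvPolynomial.induction_on with
      | C n => simp
      | add p q hp hq => rw [map_add]; exact LL.add_mem hp hq
      | mul_X p i hp => rw [map_mul]; exact LL.mul_mem hp (vv_mem_LL i)
    have hm : algebraMap PolyR FracK mm = vv 5 * vv 6 * vv 7 := by
      unfold mm; rw [map_mul, map_mul]; rfl
    rw [hm] at h
    refine mem_of_mul h (pow_ne_zero _ (mul_ne_zero (mul_ne_zero (vv_ne _) (vv_ne _)) (vv_ne _)))
      ?_ hp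
    rw [← inv_pow, mul_inv, mul_inv]
    refine LL.pow_mem (LL.mul_mem (LL.mul_mem ?_ ?_) ?_) _ <;>
      (apply Subring.subset_closure; simp)

/-- test point -/
def pt : PolyR →+* ℤ := MvPolynomial.eval₂Hom (Int.castRingHom ℤ) ![0, 0, 0, 0, 0, 1, 1, 1, 0, 1]

theorem pt_X (i : Fin 10) : pt (MvPolynomial.X i) =
    (![0, 0, 0, 0, 0, 1, 1, 1, 0, 1] : Fin 10 → ℤ) i := by
  simp [pt]

theorem not_dvd_of_pt {q : PolyR} (h : pt q ≠ 0) : ¬ (MvPolynomial.X 8 : PolyR) ∣ q := by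
  rintro ⟨r, rfl⟩
  apply h
  rw [map_mul, pt_X]
  exact zero_mul _

def q7 : PolyR := N7 (.X 0) (.X 1) (.X 2) (.X 3) (.X 4) (.X 5) (.X 6) (.X 7) (.X 8) (.X 9)
def q8 : PolyR := N8 (.X 0) (.X 1) (.X 2) (.X 3) (.X 4) (.X 5) (.X 6) (.X 7) (.X 8) (.X 9)

theorem pt_q7 : pt q7 = -1 := by
  unfold q7; rw [N7_map]; simp only [pt_X]; decide
theorem pt_q8 : pt q8 = -1 := by
  unfold q8; rw [N8_map]; simp only [pt_X]; decide
theorem pt_mm : pt mm = 1 := by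
  unfold mm; simp only [map_mul, pt_X]; decide

def qq : PolyR := MvPolynomial.X 9 * q7 * q8

theorem pt_qq : pt qq = 1 := by
  unfold qq; rw [map_mul, map_mul, pt_q7, pt_q8, pt_X]; decide

theorem q7_ne : q7 ≠ 0 := fun h => by have := pt_q7; rw [h, map_zero] at this; omega
theorem q8_ne : q8 ≠ 0 := fun h => by have := pt_q8; rw [h, map_zero] at this; omega

theorem key_inter {x : FracK} (h1 : x ∈ Loc (mm * MvPolynomial.X 8)) (h2 : x ∈ Loc (mm * qq)) :
    x ∈ LL := by
  rw [LL_eq]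
  exact Loc_inter (not_dvd_of_pt (by rw [pt_mm]; decide)) (not_dvd_of_pt (by rw [pt_qq]; decide)) h1 h2

theorem laurent_nat (Φ : FracK ≃+* FracK)
    (p0 : Φ (vv 0) = vv 0) (p1 : Φ (vv 1) = vv 1) (p2 : Φ (vv 2) = vv 2)
    (p3 : Φ (vv 3) = vv 4) (p4 : Φ (vv 4) = vv 5) (p5 : Φ (vv 5) = vv 6)
    (p6 : Φ (vv 6) = vv 7) (p7 : Φ (vv 7) = vv 8) (p8 : Φ (vv 8) = vv 9)
    (hE : EE (vv 0) (vv 1) (vv 2) (vv 3) (vv 4) (vv 5) (vv 6) (vv 7) (vv 8) (vv 9) (Φ (vv 9)) = 0)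
    (τ : ℕ → FracK) (hτ : ∀ n, τ (n + 1) = Φ (τ n)) (hτ0 : τ 0 = vv 3) :
    ∀ n, τ n ∈ LL := by
  have e1 : τ 1 = vv 4 := by rw [hτ, hτ0, p3]
  have e2 : τ 2 = vv 5 := by rw [hτ, e1, p4]
  have e3 : τ 3 = vv 6 := by rw [hτ, e2, p5]
  have e4 : τ 4 = vv 7 := by rw [hτ, e3, p6]
  have e5 : τ 5 = vv 8 := by rw [hτ, e4, p7]
  have e6 : τ 6 = vv 9 := by rw [hτ, e5, p8]
  obtain ⟨t7, e7⟩ : ∃ y, τ 7 = y := ⟨_, rfl⟩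
  obtain ⟨t8, e8⟩ : ∃ y, τ 8 = y := ⟨_, rfl⟩
  obtain ⟨t9, e9⟩ : ∃ y, τ 9 = y := ⟨_, rfl⟩
  obtain ⟨t10, e10⟩ : ∃ y, τ 10 = y := ⟨_, rfl⟩
  have f7 : Φ (vv 9) = t7 := by rw [← e7, hτ, e6]
  have f8 : Φ t7 = t8 := by rw [← e7, ← e8]; exact (hτ 7).symm
  have f9 : Φ t8 = t9 := by rw [← e8, ← e9]; exact (hτ 8).symm
  have f10 : Φ t9 = t10 := by rw [← e9, ← e10]; exact (hτ 9).symm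
  have em : ∀ x, Φ.toRingHom x = Φ x := fun _ => rfl
  rw [f7] at hE
  have hE1 := congrArg Φ.toRingHom hE
  rw [EE_map, map_zero] at hE1
  simp only [em, p0, p1, p2, p3, p4, p5, p6, p7, p8, f7, f8] at hE1
  have hE2 := congrArg Φ.toRingHom hE1
  rw [EE_map, map_zero] at hE2
  simp only [em, p0, p1, p2, p3, p4, p5, p6, p7, p8, f7, f8, f9] at hE2
  have hE3 := congrArg Φ.toRingHom hE2
  rw [EE_map, map_zero] at hE3
  simp only [em, p0, p1, p2, p3, p4, p5, p6, p7, p8, f7, f8, f9, f10] at hE3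
  have n7 : t7 ≠ 0 := by rw [← f7]; exact (map_ne_zero Φ).mpr (vv_ne 9)
  have n8 : t8 ≠ 0 := by rw [← f8]; exact (map_ne_zero Φ).mpr n7
  have hd : vv 6 ^ 3 * vv 5 ^ 2 ≠ 0 := mul_ne_zero (pow_ne_zero _ (vv_ne _)) (pow_ne_zero _ (vv_ne _))
  have hd' : vv 6 ^ 4 * vv 5 ≠ 0 := mul_ne_zero (pow_ne_zero _ (vv_ne _)) (vv_ne _)
  obtain ⟨P, hP⟩ : ∃ P, P * (vv 6 ^ 3 * vv 5 ^ 2) =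
      NP (vv 0) (vv 1) (vv 2) (vv 3) (vv 4) (vv 5) (vv 6) (vv 7) (vv 8) (vv 9) :=
    ⟨_, div_mul_cancel₀ _ hd⟩
  obtain ⟨Q, hQ⟩ : ∃ Q, Q * (vv 6 ^ 4 * vv 5) = -vv 9 * (vv 9 * vv 5 ^ 3 * vv 6 ^ 2 -
      WW (vv 1) (vv 2) (vv 3) (vv 4) (vv 5) (vv 6) (vv 7) (vv 8) (vv 9)) :=
    ⟨_, div_mul_cancel₀ _ hd'⟩
  have hS := algS (vv_ne 5) (vv_ne 6) hE hP
  have h7 := alg7 hE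
  have h8 := alg8 (vv_ne 8) hE1 hS
  have h8' := alg8' h8 hP h7
  have hQ' := algQ (vv_ne 5) (vv_ne 6) h8 hP hS hQ
  have h9 := alg9 (vv_ne 8) hE2 hS hQ'
  have h10 := alg10 (vv_ne 7) (vv_ne 8) hE3 hS h9
  have hq7 : N7 (vv 0) (vv 1) (vv 2) (vv 3) (vv 4) (vv 5) (vv 6) (vv 7) (vv 8) (vv 9)
      = algebraMap PolyR FracK q7 := by
    unfold q7; rw [N7_map]; rfl
  have hq8 : N8 (vv 0) (vv 1) (vv 2) (vv 3) (vv 4) (vv 5) (vv 6) (vv 7) (vv 8) (vv 9)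
      = algebraMap PolyR FracK q8 := by
    unfold q8; rw [N8_map]; rfl
  rw [hq7] at h7
  rw [hq8] at h8'
  have v : ∀ i, vv i ∈ LL := vv_mem_LL
  have w5 : (vv 5)⁻¹ ∈ LL := by rw [LL_eq]; exact vinv_mem i5
  have w6 : (vv 6)⁻¹ ∈ LL := by rw [LL_eq]; exact vinv_mem i6
  have w7 : (vv 7)⁻¹ ∈ LL := by rw [LL_eq]; exact vinv_mem i7
  have two : ∀ T : Subring FracK, (2 : FracK) ∈ T := fun T => ofNat_mem T 2
  have pw : ∀ {x : FracK} {n : ℕ}, x ∈ LL → x ^ n ∈ LL := fun h => LL.pow_mem h _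
  have mP : P ∈ LL := by
    refine mem_of_mul hP hd ?_ ?_
    · rw [mul_inv, ← inv_pow, ← inv_pow]
      exact LL.mul_mem (LL.pow_mem w6 _) (LL.pow_mem w5 _)
    · unfold NP
      repeat' first | with_reducible exact v _ | with_reducible exact two _ | with_reducible apply Subring.add_mem | with_reducible apply Subring.neg_mem | with_reducible apply pw | with_reducible apply Subring.mul_mem
  have mQ : Q ∈ LL := by
    refine mem_of_mul hQ hd' ?_ ?_
    · rw [mul_inv, ← inv_pow]
      exact LL.mul_mem (LL.pow_mem w6 _) w5
    · unfold WW
      repeat' first | with_reducible exact v _ | with_reducible exact two _ | with_reducible apply Subring.add_mem | with_reducible apply Subring.sub_mem | with_reducible apply Subring.neg_mem | with_reducible apply pw | with_reducible apply Subring.mul_mem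
  have m7 : t7 ∈ LL := by
    refine mem_of_mul h7 (mul_ne_zero (mul_ne_zero (pow_ne_zero _ (vv_ne _)) (pow_ne_zero _ (vv_ne _)))
      (pow_ne_zero _ (vv_ne _))) ?_ ?_
    · rw [mul_inv, mul_inv, ← inv_pow, ← inv_pow, ← inv_pow]
      exact LL.mul_mem (LL.mul_mem (LL.pow_mem w7 _) (LL.pow_mem w6 _)) (LL.pow_mem w5 _)
    · rw [LL_eq]; exact alg_mem_Loc _ _
  have m8 : t8 ∈ LL := by
    refine mem_of_mul h8' (mul_ne_zero (mul_ne_zero (pow_ne_zero _ (vv_ne _)) (pow_ne_zero _ (vv_ne _)))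
      (pow_ne_zero _ (vv_ne _))) ?_ ?_
    · rw [mul_inv, mul_inv, ← inv_pow, ← inv_pow, ← inv_pow]
      exact LL.mul_mem (LL.mul_mem (LL.pow_mem w7 _) (LL.pow_mem w6 _)) (LL.pow_mem w5 _)
    · rw [LL_eq]; exact alg_mem_Loc _ _
  have le1 : LL ≤ Loc (mm * .X 8) := by rw [LL_eq]; exact Loc_mono ⟨_, rfl⟩
  have le2 : LL ≤ Loc (mm * qq) := by rw [LL_eq]; exact Loc_mono ⟨_, rfl⟩
  have step1 : ∀ x ∈ LL, Φ x ∈ Loc (mm * .X 8) := by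
    intro x hx
    refine map_LL_le Φ.toRingHom _ ?_ ?_ ?_ ?_ ?_ ?_ ?_ ?_ ?_ ?_ ?_ ?_ ?_ hx <;>
      simp only [em, p0, p1, p2, p3, p4, p5, p6, p7, p8, f7]
    · exact vv_mem_Loc _ _
    · exact vv_mem_Loc _ _
    · exact vv_mem_Loc _ _
    · exact vv_mem_Loc _ _
    · exact vv_mem_Loc _ _
    · exact vv_mem_Loc _ _
    · exact le1 w6
    · exact vv_mem_Loc _ _
    · exact le1 w7
    · exact vv_mem_Loc _ _
    · exact vinv_mem ⟨mm, mul_comm _ _⟩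
    · exact vv_mem_Loc _ _
    · exact le1 m7
  have u9 : (vv 9)⁻¹ ∈ Loc (mm * qq) := vinv_mem ⟨mm * q7 * q8, by unfold qq; ring⟩
  have u7 : t7⁻¹ ∈ Loc (mm * qq) := by
    have hi : (algebraMap PolyR FracK q7)⁻¹ ∈ Loc (mm * qq) :=
      inv_mem_Loc q7_ne ⟨mm * .X 9 * q8, by unfold qq; ring⟩
    have : t7⁻¹ = (vv 7 ^ 2 * vv 6 ^ 3 * vv 5 ^ 2) * (algebraMap PolyR FracK q7)⁻¹ := by
      rw [← h7, mul_inv, mul_left_comm, mul_inv_cancel₀, mul_one]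
      exact (mul_ne_zero (mul_ne_zero (pow_ne_zero _ (vv_ne _)) (pow_ne_zero _ (vv_ne _)))
        (pow_ne_zero _ (vv_ne _)))
    rw [this]
    refine Subring.mul_mem _ (le2 ?_) hi
    repeat' first | with_reducible exact v _ | with_reducible apply pw | with_reducible apply Subring.mul_mem
  have u8 : t8⁻¹ ∈ Loc (mm * qq) := by
    have hi : (algebraMap PolyR FracK q8)⁻¹ ∈ Loc (mm * qq) :=
      inv_mem_Loc q8_ne ⟨mm * .X 9 * q7, by unfold qq; ring⟩
    have : t8⁻¹ = (vv 7 ^ 3 * vv 6 ^ 8 * vv 5 ^ 4) * (algebraMap PolyR FracK q8)⁻¹ := by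
      rw [← h8', mul_inv, mul_left_comm, mul_inv_cancel₀, mul_one]
      exact (mul_ne_zero (mul_ne_zero (pow_ne_zero _ (vv_ne _)) (pow_ne_zero _ (vv_ne _)))
        (pow_ne_zero _ (vv_ne _)))
    rw [this]
    refine Subring.mul_mem _ (le2 ?_) hi
    repeat' first | with_reducible exact v _ | with_reducible apply pw | with_reducible apply Subring.mul_mem
  have m9 : t9 ∈ LL := by
    refine key_inter (by rw [← f9]; exact step1 _ m8) ?_
    refine mem_of_mul h9 (mul_ne_zero (pow_ne_zero _ (vv_ne _)) (pow_ne_zero _ (vv_ne _))) ?_ (le2 ?_)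
    · rw [mul_inv, ← inv_pow, ← inv_pow]
      exact Subring.mul_mem _ (Subring.pow_mem _ u9 _) (Subring.pow_mem _ (le2 w7) _)
    · repeat' first | with_reducible exact v _ | with_reducible exact m7 | with_reducible exact m8 | with_reducible exact mP | with_reducible exact mQ | with_reducible exact two _ | with_reducible apply Subring.add_mem | with_reducible apply Subring.neg_mem | with_reducible apply pw | with_reducible apply Subring.mul_mem
  have m10 : t10 ∈ LL := by
    refine key_inter (by rw [← f10]; exact step1 _ m9) ?_
    refine mem_of_mul h10 (mul_ne_zero (mul_ne_zero (pow_ne_zero _ n7) (pow_ne_zero _ (vv_ne _)))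
      (vv_ne _)) ?_ (le2 ?_)
    · rw [mul_inv, mul_inv, ← inv_pow, ← inv_pow]
      exact Subring.mul_mem _ (Subring.mul_mem _ (Subring.pow_mem _ u7 _) (Subring.pow_mem _ u9 _))
        (le2 w7)
    · repeat' first | with_reducible exact v _ | with_reducible exact m7 | with_reducible exact m8 | with_reducible exact m9 | with_reducible exact mP | with_reducible exact mQ | with_reducible exact two _ | with_reducible apply Subring.add_mem | with_reducible apply Subring.sub_mem | with_reducible apply Subring.neg_mem | with_reducible apply pw | with_reducible apply Subring.mul_mem
  have step4 : ∀ x ∈ LL, Φ (Φ (Φ (Φ x))) ∈ Loc (mm * qq) := by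
    intro x hx
    have em4 : ∀ x, ((Φ.toRingHom.comp Φ.toRingHom).comp (Φ.toRingHom.comp Φ.toRingHom)) x =
      Φ (Φ (Φ (Φ x))) := fun _ => rfl
    rw [← em4]
    refine map_LL_le _ _ ?_ ?_ ?_ ?_ ?_ ?_ ?_ ?_ ?_ ?_ ?_ ?_ ?_ hx <;>
      simp only [em4, p0, p1, p2, p3, p4, p5, p6, p7, p8, f7, f8, f9, f10]
    · exact vv_mem_Loc _ _
    · exact vv_mem_Loc _ _
    · exact vv_mem_Loc _ _
    · exact vv_mem_Loc _ _
    · exact vv_mem_Loc _ _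
    · exact vv_mem_Loc _ _
    · exact u9
    · exact le2 m7
    · exact u7
    · exact le2 m8
    · exact u8
    · exact le2 m9
    · exact le2 m10
  intro n
  induction n using Nat.strong_induction_on with
  | _ n ih =>
    rcases lt_or_ge n 11 with hn | hn
    · interval_cases n
      · rw [hτ0]; exact v _
      · rw [e1]; exact v _
      · rw [e2]; exact v _
      · rw [e3]; exact v _
      · rw [e4]; exact v _
      · rw [e5]; exact v _
      · rw [e6]; exact v _
      · rw [e7]; exact m7
      · rw [e8]; exact m8
      · rw [e9]; exact m9
      · rw [e10]; exact m10
    · obtain ⟨k, rfl⟩ : ∃ k, n = k + 3 + 1 := ⟨n - 4, by omega⟩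
      apply key_inter
      · rw [hτ]; exact step1 _ (ih _ (by omega))
      · have := step4 _ (ih k (by omega))
        rwa [← hτ, ← hτ, ← hτ, ← hτ] at this

theorem stmt4 :
    ∃ τ : ℤ → FracK,
      (∀ i : Fin 7, τ (i.1 : ℤ) = tv i) ∧
      (∀ n : ℤ, τ n ≠ 0) ∧
      (∀ n : ℤ,
        τ (n + 7) * τ (n + 4) ^ 2 * τ (n + 3) ^ 3 * τ (n + 2) ^ 2
          + τ (n + 6) ^ 2 * τ (n + 3) ^ 4 * τ (n + 2) ^ 2
          + 2 * τ (n + 6) * τ (n + 5) ^ 2 * τ (n + 3) ^ 2 * τ (n + 2) ^ 3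
          + τ (n + 6) * τ (n + 5) * τ (n + 4) ^ 2 * τ (n + 3) ^ 2 * τ (n + 2) * τ (n + 1)
          + τ (n + 5) ^ 4 * τ (n + 2) ^ 4
          + 2 * τ (n + 5) ^ 3 * τ (n + 4) ^ 2 * τ (n + 2) ^ 2 * τ (n + 1)
          + τ (n + 5) ^ 2 * τ (n + 4) ^ 4 * τ (n + 1) ^ 2
          + τ (n + 5) ^ 2 * τ (n + 4) ^ 3 * τ (n + 3) ^ 2 * τ n
          + vnu * (τ (n + 6) * τ (n + 5) * τ (n + 4) * τ (n + 3) ^ 3 * τ (n + 2) ^ 2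
              + τ (n + 5) ^ 3 * τ (n + 4) * τ (n + 3) * τ (n + 2) ^ 3
              + τ (n + 5) ^ 2 * τ (n + 4) ^ 3 * τ (n + 3) * τ (n + 2) * τ (n + 1))
          + vb * τ (n + 5) ^ 2 * τ (n + 4) ^ 2 * τ (n + 3) ^ 2 * τ (n + 2) ^ 2
          + va * τ (n + 5) * τ (n + 4) ^ 3 * τ (n + 3) ^ 3 * τ (n + 2) = 0) ∧
      (∀ n : ℤ, τ n ∈ Subring.closure
        ({va, vb, vnu, tv 0, tv 1, tv 2, (tv 2)⁻¹, tv 3, (tv 3)⁻¹,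
          tv 4, (tv 4)⁻¹, tv 5, tv 6} : Set FracK)) := by
  obtain ⟨ρ, Φ, ⟨r0, r1, r2, r3, r4, r5, r6, r7, r8, r9⟩, ⟨p0, p1, p2, p3, p4, p5, p6, p7, p8⟩,
    hE, hsym⟩ := exists_sys
  let G : RingAut FracK := Φ
  have hadd : ∀ n k : ℤ, (G ^ (n + k)) (vv 3) = (G ^ n) ((G ^ k) (vv 3)) := fun n k => by
    rw [zpow_add]; rfl
  have hG : ∀ x, G x = Φ x := fun _ => rfl
  have hsucc : ∀ n : ℤ, (G ^ (n + 1)) (vv 3) = Φ ((G ^ n) (vv 3)) := fun n => by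
    rw [add_comm, hadd, zpow_one]
  have g0 : (G ^ (0 : ℤ)) (vv 3) = vv 3 := by rw [zpow_zero]; rfl
  have g1 : (G ^ (1 : ℤ)) (vv 3) = vv 4 := by rw [show (1 : ℤ) = 0 + 1 from rfl, hsucc, g0, p3]
  have g2 : (G ^ (2 : ℤ)) (vv 3) = vv 5 := by rw [show (2 : ℤ) = 1 + 1 from rfl, hsucc, g1, p4]
  have g3 : (G ^ (3 : ℤ)) (vv 3) = vv 6 := by rw [show (3 : ℤ) = 2 + 1 from rfl, hsucc, g2, p5]
  have g4 : (G ^ (4 : ℤ)) (vv 3) = vv 7 := by rw [show (4 : ℤ) = 3 + 1 from rfl, hsucc, g3, p6]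
  have g5 : (G ^ (5 : ℤ)) (vv 3) = vv 8 := by rw [show (5 : ℤ) = 4 + 1 from rfl, hsucc, g4, p7]
  have g6 : (G ^ (6 : ℤ)) (vv 3) = vv 9 := by rw [show (6 : ℤ) = 5 + 1 from rfl, hsucc, g5, p8]
  have g7 : (G ^ (7 : ℤ)) (vv 3) = Φ (vv 9) := by rw [show (7 : ℤ) = 6 + 1 from rfl, hsucc, g6]
  have hnat := laurent_nat Φ p0 p1 p2 p3 p4 p5 p6 p7 p8 hE (fun n : ℕ => (G ^ (n : ℤ)) (vv 3))
    (fun n => by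
      have := hsucc n
      exact_mod_cast this) g0
  have hcons : ∀ c, Φ c = c → ∀ n : ℤ, (G ^ n) c = c := fun c hc n => by
    have hc' : G ∈ MulAction.stabilizer (RingAut FracK) c := hc
    exact Subgroup.zpow_mem _ hc' n
  refine ⟨fun n => (G ^ n) (vv 3), ?_, ?_, ?_, ?_⟩
  · intro i
    fin_cases i
    · exact g0
    · exact g1
    · exact g2
    · exact g3
    · exact g4
    · exact g5
    · exact g6
  · intro n
    exact (map_ne_zero (G ^ n)).mpr (vv_ne 3)
  · intro n
    have h := congrArg (G ^ n).toRingHom hE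
    have em : ∀ x, (G ^ n).toRingHom x = (G ^ n) x := fun _ => rfl
    rw [EE_map, map_zero] at h
    simp only [em, hcons _ p0 n, hcons _ p1 n, hcons _ p2 n] at h
    rw [← g7, ← g6, ← g5, ← g4, ← g3, ← g2, ← g1, ← hadd, ← hadd, ← hadd, ← hadd, ← hadd, ← hadd,
      ← hadd] at h
    exact h
  · have hrefl : ∀ n : ℕ, ρ ((G ^ (n : ℤ)) (vv 3)) = (G ^ (6 - n : ℤ)) (vv 3) := by
      intro n
      induction n with
      | zero => 
        simp only [Nat.cast_zero, sub_zero]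
        rw [g0, g6, r3]
      | succ n ih =>
        apply Φ.injective
        push_cast
        rw [hsucc, hsym, ih, ← hsucc]
        congr 2; ring
    have hρL : ∀ x ∈ LL, ρ x ∈ LL := by
      intro x hx
      have w5 : (vv 5)⁻¹ ∈ LL := by rw [LL_eq]; exact vinv_mem i5
      have w6 : (vv 6)⁻¹ ∈ LL := by rw [LL_eq]; exact vinv_mem i6
      have w7 : (vv 7)⁻¹ ∈ LL := by rw [LL_eq]; exact vinv_mem i7
      have em : ∀ x, ρ.toRingHom x = ρ x := fun _ => rfl
      refine map_LL_le ρ.toRingHom LL ?_ ?_ ?_ ?_ ?_ ?_ ?_ ?_ ?_ ?_ ?_ ?_ ?_ hx <;>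
        simp only [em, r0, r1, r2, r3, r4, r5, r6, r7, r8, r9] <;>
        first | exact vv_mem_LL _ | assumption
    intro n
    change (G ^ n) (vv 3) ∈ LL
    rcases le_or_gt 0 n with hn | hn
    · obtain ⟨k, rfl⟩ := Int.eq_ofNat_of_zero_le hn
      exact hnat k
    · obtain ⟨k, hk⟩ := Int.eq_ofNat_of_zero_le (show 0 ≤ 6 - n by omega)
      have : n = 6 - (k : ℤ) := by omega
      rw [this, ← hrefl]
      exact hρL _ (hnat k)

end
end

section
/- Let w : ℤ → ℂ∖{0} and let p, q, r, ρ : ℤ → ℂ be sequences satisfying, for all n ∈ ℤ: w_{n+1} = −(2p_n − q_n + r_n)/2, p_{n+1} = q_n − p_n, q_{n+1} = −ρ_n / w_{n+1}, r_{n+1} = −2 w_{n+1}, ρ_{n+1} = −w_{n+1} q_n (these are the genus-1 Volterra map recursion relations, with p_n, q_n the coefficients of x in P_n, Q_n and r_n, ρ_n the coefficients of x, x² in R_n). Set c₁ := 2(p₀ + r₀). Then for all n ∈ ℤ: w_{n+1}(2w_{n+2} + 2w_{n+1} + c₁) = w_n(2w_n + 2w_{n−1} + c₁). -/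
theorem stmt7 (w : ℤ → ℂ) (hw0 : ∀ n : ℤ, w n ≠ 0)
    (p q r ρ : ℤ → ℂ)
    (hwrec : ∀ n : ℤ, w (n + 1) = -(2 * p n - q n + r n) / 2)
    (hp : ∀ n : ℤ, p (n + 1) = q n - p n)
    (hq : ∀ n : ℤ, q (n + 1) = -ρ n / w (n + 1))
    (hr : ∀ n : ℤ, r (n + 1) = -2 * w (n + 1))
    (hρ : ∀ n : ℤ, ρ (n + 1) = -(w (n + 1)) * q n)
    (c1 : ℂ) (hc1 : c1 = 2 * (p 0 + r 0)) :
    ∀ n : ℤ,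
      w (n + 1) * (2 * w (n + 2) + 2 * w (n + 1) + c1)
        = w n * (2 * w n + 2 * w (n - 1) + c1) := by
  have hr' : ∀ n, r n = -2 * w n := fun n => by simpa using hr (n - 1)
  have step : ∀ n, p (n + 1) + r (n + 1) = p n + r n := fun n => by
    rw [hp, hr, hwrec]; ring
  have inv : ∀ n : ℤ, p n + r n = p 0 + r 0 := fun n => by
    induction n using Int.induction_on with
    | zero => rfl
    | succ k ih => rw [step, ih]
    | pred k ih =>
      have h := step (-(k : ℤ) - 1)
      rw [sub_add_cancel] at h
      rw [← h, ih]
  have pn : ∀ n, p n = c1 / 2 + 2 * w n := fun n => by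
    have h := inv n
    rw [hr' n] at h
    linear_combination h - hc1 / 2
  have qn : ∀ n, q n = c1 + 2 * w n + 2 * w (n + 1) := fun n => by
    linear_combination pn (n + 1) + pn n - hp n
  intro n
  have h1 : q (n + 1) * w (n + 1) = -ρ n := by
    rw [hq, div_mul_cancel₀ _ (hw0 _)]
  have h2 := hρ (n - 1)
  rw [sub_add_cancel] at h2
  have h3 := qn (n + 1)
  have h4 := qn (n - 1)
  rw [sub_add_cancel] at h4
  rw [show n + 1 + 1 = n + 2 by ring] at h3
  rw [h3] at h1
  rw [h4] at h2
  linear_combination h1 - h2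
end

section
/- Let w : ℤ → ℂ∖{0} and let p1, p2, q1, q2, r1, r2, r3 : ℤ → ℂ be sequences satisfying, for all n ∈ ℤ: w_{n+1} = −(2·p1_n − q1_n + r1_n)/2, p1_{n+1} = q1_n − p1_n, p2_{n+1} = q2_n − p2_n, q1_{n+1} = −(2·p2_n − q2_n + r2_n)/w_{n+1}, q2_{n+1} = −r3_n / w_{n+1}, r1_{n+1} = −2 w_{n+1}, r2_{n+1} = −w_{n+1}·q1_n, r3_{n+1} = −w_{n+1}·q2_n (the genus-2 Volterra map recursion). Set c₁ := 2(p1₀ + r1₀), c₂ := 2·p2₀ + p1₀² + q1₀·r1₀ + 2·r2₀, c₃ := 2·p1₀·p2₀ + 2·r3₀ + q1₀·r2₀ + q2₀·r1₀, and define ν := c₁/2, b := (c₂ − c₁²/4)/2, a := c₃/4 − c₁c₂/8 + c₁³/32. Then for all n ∈ ℤ the sequence (w_n) satisfies the (P.iv) recurrence with parameters a, b, ν: w_{n+4}w_{n+3}w_{n+2} + w_{n+2}w_{n+1}w_n + 2w_{n+2}²(w_{n+3}+w_{n+1}) + w_{n+2}(w_{n+3}² + w_{n+3}w_{n+1} +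 w_{n+1}²) + w_{n+2}³ + ν·w_{n+2}(w_{n+3}+w_{n+2}+w_{n+1}) + b·w_{n+2} + a = 0. -/
theorem stmt8 (w : ℤ → ℂ) (hw0 : ∀ n : ℤ, w n ≠ 0)
    (p1 p2 q1 q2 r1 r2 r3 : ℤ → ℂ)
    (hwrec : ∀ n : ℤ, w (n + 1) = -(2 * p1 n - q1 n + r1 n) / 2)
    (hp1 : ∀ n : ℤ, p1 (n + 1) = q1 n - p1 n)
    (hp2 : ∀ n : ℤ, p2 (n + 1) = q2 n - p2 n)
    (hq1 : ∀ n : ℤ, q1 (n + 1) = -(2 * p2 n - q2 n + r2 n) / w (n + 1))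
    (hq2 : ∀ n : ℤ, q2 (n + 1) = -r3 n / w (n + 1))
    (hr1 : ∀ n : ℤ, r1 (n + 1) = -2 * w (n + 1))
    (hr2 : ∀ n : ℤ, r2 (n + 1) = -(w (n + 1)) * q1 n)
    (hr3 : ∀ n : ℤ, r3 (n + 1) = -(w (n + 1)) * q2 n)
    (c1 c2 c3 a b ν : ℂ)
    (hc1 : c1 = 2 * (p1 0 + r1 0))
    (hc2 : c2 = 2 * p2 0 + p1 0 ^ 2 + q1 0 * r1 0 + 2 * r2 0)
    (hc3 : c3 = 2 * p1 0 * p2 0 + 2 * r3 0 + q1 0 * r2 0 + q2 0 * r1 0)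
    (hν : ν = c1 / 2)
    (hb : b = (c2 - c1 ^ 2 / 4) / 2)
    (ha : a = c3 / 4 - c1 * c2 / 8 + c1 ^ 3 / 32) :
    ∀ n : ℤ,
      w (n + 4) * w (n + 3) * w (n + 2) + w (n + 2) * w (n + 1) * w n
        + 2 * w (n + 2) ^ 2 * (w (n + 3) + w (n + 1))
        + w (n + 2) * (w (n + 3) ^ 2 + w (n + 3) * w (n + 1) + w (n + 1) ^ 2)
        + w (n + 2) ^ 3
        + ν * w (n + 2) * (w (n + 3) + w (n + 2) + w (n + 1))
        + b * w (n + 2) + a = 0 := by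
  have H1 : ∀ n, 2 * (p1 n + r1 n) = c1 := by
    have st : ∀ n, 2 * (p1 (n+1) + r1 (n+1)) = 2 * (p1 n + r1 n) := by
      intro n
      rw [hp1, hr1, hwrec]; ring
    intro n
    induction n using Int.induction_on with
    | zero => exact hc1.symm
    | succ i ih => rw [st, ih]
    | pred i ih => rw [← st, sub_add_cancel, ih]
  have Q1 : ∀ n, w (n+1) * q1 (n+1) = -(2 * p2 n - q2 n + r2 n) := by
    intro n
    rw [hq1]; field_simp [hw0 (n+1)]
  have Q2 : ∀ n, w (n+1) * q2 (n+1) = -r3 n := by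
    intro n
    rw [hq2]; field_simp [hw0 (n+1)]
  have W : ∀ n, 2 * w (n + 1) = -(2 * p1 n - q1 n + r1 n) := by
    intro n
    rw [hwrec]; ring
  have H2 : ∀ n, 2 * p2 n + p1 n ^ 2 + q1 n * r1 n + 2 * r2 n = c2 := by
    have st : ∀ n, 2 * p2 (n+1) + p1 (n+1) ^ 2 + q1 (n+1) * r1 (n+1) + 2 * r2 (n+1)
        = 2 * p2 n + p1 n ^ 2 + q1 n * r1 n + 2 * r2 n := by
      intro n
      rw [hp1, hp2, hr1, hr2]
      linear_combination (-2) * Q1 n - q1 n * W n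
    intro n
    induction n using Int.induction_on with
    | zero => exact hc2.symm
    | succ i ih => rw [st, ih]
    | pred i ih => rw [← st, sub_add_cancel, ih]
  have H3 : ∀ n, 2 * p1 n * p2 n + 2 * r3 n + q1 n * r2 n + q2 n * r1 n = c3 := by
    have st : ∀ n, 2 * p1 (n+1) * p2 (n+1) + 2 * r3 (n+1) + q1 (n+1) * r2 (n+1)
          + q2 (n+1) * r1 (n+1)
        = 2 * p1 n * p2 n + 2 * r3 n + q1 n * r2 n + q2 n * r1 n := by
      intro n
      rw [hp1, hp2, hr1, hr2, hr3]
      linear_combination (-2) * Q2 n - q1 n * Q1 n - q2 n * W n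
    intro n
    induction n using Int.induction_on with
    | zero => exact hc3.symm
    | succ i ih => rw [st, ih]
    | pred i ih => rw [← st, sub_add_cancel, ih]
  have R1 : ∀ n, r1 n = -2 * w n := by
    intro n
    have := hr1 (n-1)
    rwa [sub_add_cancel] at this
  have P1 : ∀ n, p1 n = c1 / 2 + 2 * w n := by
    intro n
    linear_combination (1/2) * H1 n - R1 n
  have q1e : ∀ n, q1 n = c1 + 2 * w n + 2 * w (n+1) := by
    intro n
    linear_combination P1 (n+1) + P1 n - hp1 n
  have R2 : ∀ n, r2 (n+1) = -w (n+1) * (c1 + 2 * w n + 2 * w (n+1)) := by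
    intro n
    rw [hr2, q1e]
  have P2 : ∀ n, p2 (n+1) = (c2 - (c1 / 2 + 2 * w (n+1))^2
      + (c1 + 2 * w (n+1) + 2 * w (n+1+1)) * (2 * w (n+1))
      + 2 * w (n+1) * (c1 + 2 * w n + 2 * w (n+1))) / 2 := by
    intro n
    have h := H2 (n+1)
    rw [R2, P1, q1e, R1] at h
    linear_combination h / 2
  intro n
  have e2 : n + 1 + 1 = n + 2 := by ring
  have e3 : n + 2 + 1 = n + 3 := by ring
  have e4 : n + 3 + 1 = n + 4 := by ring
  have a1 := P2 n
  have a2 := P2 (n+1)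
  have a3 := P2 (n+2)
  have b1 := hp2 (n+1)
  have b2 := hp2 (n+2)
  have g3 := hr3 (n+1)
  have g2 := R2 (n+1)
  have h := H3 (n+2)
  have k := q1e (n+2)
  simp only [e2, e3, e4] at a1 a2 a3 b1 b2 g3 g2 k
  have d1 : q2 (n+1) = p2 (n+2) + p2 (n+1) := by rw [b1]; ring
  have d2 : q2 (n+2) = p2 (n+3) + p2 (n+2) := by rw [b2]; ring
  rw [g3, g2, k, d1, d2, a1, a2, a3, P1, R1] at h
  rw [ha, hb, hν]
  linear_combination (-1/4) * h
end

section
/- Let a, b, ν ∈ ℂ and let w₀, w₁, w₂, w₃, w₄ ∈ ℂ with w₁, w₂, w₃ nonzero, satisfying the (P.iv) relation w₄w₃w₂ + w₂w₁w₀ + 2w₂²(w₃+w₁) + w₂(w₃² + w₃w₁ + w₁²) + w₂³ + ν·w₂(w₃+w₂+w₁) + b·w₂ + a = 0. Then K₁(w₁,w₂,w₃,w₄) = K₁(w₀,w₁,w₂,w₃) and K₂(w₁,w₂,w₃,w₄) = K₂(w₀,w₁,w₂,w₃); that is, K₁ and K₂ are invariants of the map (w₀,w₁,w₂,w₃) ↦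 (w₁,w₂,w₃,w₄) defined by the (P.iv) recurrence. -/
theorem stmt11 (a b ν : ℂ) (w0 w1 w2 w3 w4 : ℂ)
    (h1 : w1 ≠ 0) (h2 : w2 ≠ 0) (h3 : w3 ≠ 0)
    (hpiv : w4 * w3 * w2 + w2 * w1 * w0
      + 2 * w2 ^ 2 * (w3 + w1)
      + w2 * (w3 ^ 2 + w3 * w1 + w1 ^ 2)
      + w2 ^ 3 + ν * w2 * (w3 + w2 + w1) + b * w2 + a = 0) :
    K1 a b ν w1 w2 w3 w4 = K1 a b ν w0 w1 w2 w3 ∧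
    K2 a b ν w1 w2 w3 w4 = K2 a b ν w0 w1 w2 w3 := by
  unfold K1 K2
  constructor
  · linear_combination (w3 - w1) * hpiv
  · linear_combination (w4 * w3 + w3 ^ 2 + w2 * w3 - w0 * w1 - w1 ^ 2 - w1 * w2) * hpiv
end

section
/- Let a, b, ν ∈ ℂ. For every (w₀,w₁,w₂,w₃) ∈ ℂ⁴ with w₁ ≠ 0 and w₂ ≠ 0, one has Σ_{0 ≤ i, j ≤ 3} (∂K₁/∂w_i)(w) · Π_{ij}(w) · (∂K₂/∂w_j)(w) = 0, where the partial derivatives are those of the polynomials K₁, K₂ and Π(w) is the antisymmetric 4×4 structure matrix of the (P.iv) Poisson bracket; that is, K₁ and K₂ are in involution with respect to this bracket. -/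
open MvPolynomial

/-- The first integral `K₁` of the (P.iv) map, as a polynomial in (w₀,w₁,w₂,w₃). -/
noncomputable def K1poly (a b ν : ℂ) : MvPolynomial (Fin 4) ℂ :=
  X 1 * X 2 * (X 2 * X 3 + X 0 * X 1 - X 0 * X 3 + (X 1 + X 2) ^ 2
      + C ν * (X 1 + X 2) + C b)
    + C a * (X 1 + X 2)

/-- The second first integral `K₂` of the (P.iv) map, as a polynomial in (w₀,w₁,w₂,w₃). -/
noncomputable def K2poly (a b ν : ℂ) : MvPolynomial (Fin 4) ℂ :=
  X 1 * X 2 * (X 0 ^ 2 * X 1 + X 3 ^ 2 * X 2 + X 0 * X 3 * (X 1 + X 2)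
      + X 0 * (X 2 ^ 2 + 2 * X 1 ^ 2) + X 3 * (X 1 ^ 2 + 2 * X 2 ^ 2)
      + 3 * (X 0 + X 3) * X 1 * X 2 + (X 1 + X 2) ^ 3
      + C ν * (X 0 * X 3 + (X 0 + X 3) * (X 1 + X 2) + (X 1 + X 2) ^ 2)
      + C b * (X 0 + X 1 + X 2 + X 3))
    + C a * (X 0 * X 1 + X 3 * X 2 + (X 1 + X 2) ^ 2)

/-- The antisymmetric structure matrix `Π(w)` of the (P.iv) Poisson bracket. -/
noncomputable def PivPi (ν : ℂ) (w : Fin 4 → ℂ) : Matrix (Fin 4) (Fin 4) ℂ :=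
  !![0, 0, 1 / w 1, -((w 0 + 2 * w 1 + 2 * w 2 + w 3 + ν) / (w 1 * w 2));
     0, 0, 0, 1 / w 2;
     -(1 / w 1), 0, 0, 0;
     (w 0 + 2 * w 1 + 2 * w 2 + w 3 + ν) / (w 1 * w 2), -(1 / w 2), 0, 0]

theorem stmt12 (a b ν : ℂ) (w : Fin 4 → ℂ) (h1 : w 1 ≠ 0) (h2 : w 2 ≠ 0) :
    ∑ i : Fin 4, ∑ j : Fin 4,
      MvPolynomial.eval w (MvPolynomial.pderiv i (K1poly a b ν))
        * PivPi ν w i j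
        * MvPolynomial.eval w (MvPolynomial.pderiv j (K2poly a b ν)) = 0 := by
  simp only [Fin.sum_univ_four, K1poly, K2poly, map_add, map_sub, Derivation.leibniz,
    Derivation.leibniz_pow, pderiv_C, pderiv_X, smul_eq_mul, nsmul_eq_mul, PivPi]
  have e2 : ∀ i : Fin 4, pderiv i (2 : MvPolynomial (Fin 4) ℂ) = 0 := fun i => by
    exact_mod_cast (pderiv i).map_natCast 2
  have e3 : ∀ i : Fin 4, pderiv i (3 : MvPolynomial (Fin 4) ℂ) = 0 := fun i => by
    exact_mod_cast (pderiv i).map_natCast 3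
  simp [e2, e3, Pi.single_apply]
  field_simp
  ring
end

section
/- Let a, b, ν ∈ ℂ and define F(w₀,w₁,w₂,w₃) := −(w₀w₁w₂ + w₁w₂w₃ + w₁²w₂ + w₂w₃² + 2w₁w₂² + 2w₂²w₃ + w₂³ + ν(w₁w₂ + w₂w₃ + w₂²) + b·w₂ + a)/(w₂w₃), and φ(w₀,w₁,w₂,w₃) := (w₁, w₂, w₃, F(w₀,w₁,w₂,w₃)), the birational map defined by the (P.iv) recurrence. Then φ is a Poisson map for the (P.iv) Poisson bracket: for every w = (w₀,w₁,w₂,w₃) ∈ ℂ⁴ with w₁, w₂, w₃ all nonzero, and for all indices 0 ≤ i, j ≤ 3, Σ_{0 ≤ k, l ≤ 3} (∂φ_i/∂w_k)(w) · Π_{kl}(w) · (∂φ_j/∂w_l)(w) = Π_{ij}(φ(w)), where ∂/∂w_k denotes the complex partial derivative (each φ_i is a rational function, holomorphic where w₂w₃ ≠ 0). -/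
/-- The rational function `F` defining the fourth component of the (P.iv) map. -/
noncomputable def pivF (a b ν : ℂ) (w : Fin 4 → ℂ) : ℂ :=
  -(w 0 * w 1 * w 2 + w 1 * w 2 * w 3 + w 1 ^ 2 * w 2 + w 2 * w 3 ^ 2
      + 2 * w 1 * w 2 ^ 2 + 2 * w 2 ^ 2 * w 3 + w 2 ^ 3
      + ν * (w 1 * w 2 + w 2 * w 3 + w 2 ^ 2) + b * w 2 + a) / (w 2 * w 3)

/-- The (P.iv) birational map `φ(w₀,w₁,w₂,w₃) = (w₁,w₂,w₃,F(w₀,w₁,w₂,w₃))`. -/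
noncomputable def pivPhi (a b ν : ℂ) (w : Fin 4 → ℂ) : Fin 4 → ℂ :=
  ![w 1, w 2, w 3, pivF a b ν w]

/-- The complex partial derivative `∂f/∂w_k` of a function `f : ℂ⁴ → ℂ` at the point `w`. -/
noncomputable def cpderiv (f : (Fin 4 → ℂ) → ℂ) (k : Fin 4) (w : Fin 4 → ℂ) : ℂ :=
  deriv (fun z : ℂ => f (Function.update w k z)) (w k)

theorem cp_coord (m k : Fin 4) (w : Fin 4 → ℂ) :
    cpderiv (fun v => v m) k w = if m = k then 1 else 0 := by
  unfold cpderiv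
  by_cases h : m = k
  · subst h; simp
  · simp [h]

theorem cp_F0 (a b ν : ℂ) (w : Fin 4 → ℂ) (h2 : w 2 ≠ 0) (h3 : w 3 ≠ 0) :
    cpderiv (pivF a b ν) 0 w = -(w 1 / w 3) := by
  have e : (fun z : ℂ => pivF a b ν (Function.update w 0 z))
      = fun z => -(w 1 / w 3) * z + pivF a b ν (Function.update w 0 0) := by
    funext z
    simp [pivF, Function.update]
    field_simp
    ring
  unfold cpderiv
  rw [e]
  simpa using (((hasDerivAt_id (w 0)).const_mul (-(w 1 / w 3))).add_const
    (pivF a b ν (Function.update w 0 0))).deriv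

theorem cp_F1 (a b ν : ℂ) (w : Fin 4 → ℂ) (h2 : w 2 ≠ 0) (h3 : w 3 ≠ 0) :
    cpderiv (pivF a b ν) 1 w = -((w 0 + 2 * w 1 + 2 * w 2 + w 3 + ν) / w 3) := by
  have e : (fun z : ℂ => pivF a b ν (Function.update w 1 z))
      = fun z => (-(1 / w 3) * z ^ 2 + -((w 0 + 2 * w 2 + w 3 + ν) / w 3) * z)
        + pivF a b ν (Function.update w 1 0) := by
    funext z
    simp [pivF, Function.update]
    field_simp
    ring
  unfold cpderiv
  rw [e]
  have := (((((hasDerivAt_id (w 1)).pow 2).const_mul (-(1 / w 3))).add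
    ((hasDerivAt_id (w 1)).const_mul (-((w 0 + 2 * w 2 + w 3 + ν) / w 3)))).add_const
    (pivF a b ν (Function.update w 1 0))).deriv
  refine Eq.trans this ?_
  simp
  field_simp
  ring

theorem cp_F3 (a b ν : ℂ) (w : Fin 4 → ℂ) (h2 : w 2 ≠ 0) (h3 : w 3 ≠ 0) :
    cpderiv (pivF a b ν) 3 w
      = -((w 1 + 2 * w 2 + 2 * w 3 + pivF a b ν w + ν) / w 3) := by
  have hn : HasDerivAt (fun z : ℂ => -(w 2 * z ^ 2 + (w 1 * w 2 + 2 * w 2 ^ 2 + ν * w 2) * z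
      + (w 0 * w 1 * w 2 + w 1 ^ 2 * w 2 + 2 * w 1 * w 2 ^ 2 + w 2 ^ 3
        + ν * (w 1 * w 2 + w 2 ^ 2) + b * w 2 + a)))
      (-(w 2 * (2 * w 3) + (w 1 * w 2 + 2 * w 2 ^ 2 + ν * w 2))) (w 3) := by
    have := ((((((hasDerivAt_id (w 3)).pow 2).const_mul (w 2)).add
      ((hasDerivAt_id (w 3)).const_mul (w 1 * w 2 + 2 * w 2 ^ 2 + ν * w 2))).add_const
      (w 0 * w 1 * w 2 + w 1 ^ 2 * w 2 + 2 * w 1 * w 2 ^ 2 + w 2 ^ 3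
        + ν * (w 1 * w 2 + w 2 ^ 2) + b * w 2 + a))).neg
    refine this.congr_deriv ?_
    simp
  have hd : HasDerivAt (fun z : ℂ => w 2 * z) (w 2) (w 3) := by
    simpa using (hasDerivAt_id (w 3)).const_mul (w 2)
  have e : (fun z : ℂ => pivF a b ν (Function.update w 3 z)) = fun z : ℂ =>
      (-(w 2 * z ^ 2 + (w 1 * w 2 + 2 * w 2 ^ 2 + ν * w 2) * z
      + (w 0 * w 1 * w 2 + w 1 ^ 2 * w 2 + 2 * w 1 * w 2 ^ 2 + w 2 ^ 3
        + ν * (w 1 * w 2 + w 2 ^ 2) + b * w 2 + a))) / (w 2 * z) := by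
    funext z
    simp [pivF, Function.update]
    congr 1
    ring
  unfold cpderiv
  rw [e]
  refine (hn.div hd (mul_ne_zero h2 h3)).deriv.trans ?_
  unfold pivF
  field_simp
  ring

theorem stmt13 (a b ν : ℂ) :
    ∀ w : Fin 4 → ℂ, w 1 ≠ 0 → w 2 ≠ 0 → w 3 ≠ 0 →
      ∀ i j : Fin 4,
        ∑ k : Fin 4, ∑ l : Fin 4,
          cpderiv (fun v => pivPhi a b ν v i) k w
            * PivPi ν w k l
            * cpderiv (fun v => pivPhi a b ν v j) l w
        = PivPi ν (pivPhi a b ν w) i j := by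
  intro w h1 h2 h3 i j
  have c0 : (fun v => pivPhi a b ν v 0) = fun v => v 1 := rfl
  have c1 : (fun v => pivPhi a b ν v 1) = fun v => v 2 := rfl
  have c2 : (fun v => pivPhi a b ν v 2) = fun v => v 3 := rfl
  have c3 : (fun v => pivPhi a b ν v 3) = pivF a b ν := rfl
  have p0 : pivPhi a b ν w 0 = w 1 := rfl
  have p1 : pivPhi a b ν w 1 = w 2 := rfl
  have p2 : pivPhi a b ν w 2 = w 3 := rfl
  have p3 : pivPhi a b ν w 3 = pivF a b ν w := rfl
  have f0 := cp_F0 a b ν w h2 h3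
  have f1 := cp_F1 a b ν w h2 h3
  have f3 := cp_F3 a b ν w h2 h3
  generalize pivF a b ν w = X at *
  fin_cases i <;> fin_cases j <;>
    simp [c0, c1, c2, c3, p0, p1, p2, p3, f0, f1, f3, Fin.sum_univ_four, cp_coord, PivPi] <;>
    field_simp <;> ring
end

section
/- Let a, b, ν ∈ ℂ. For every (w₀,w₁,w₂,w₃) ∈ ℂ⁴ with w₁ ≠ 0 and w₂ ≠ 0, the Hamiltonian vector field of K₁ with respect to the (P.iv) Poisson bracket has Volterra form in its middle components: Σ_{0 ≤ j ≤ 3} Π_{1j}(w) · (∂K₁/∂w_j)(w) = w₁(w₂ − w₀) and Σ_{0 ≤ j ≤ 3} Π_{2j}(w) · (∂K₁/∂w_j)(w) = w₂(w₃ − w₁), where the partial derivatives are those of the polynomial K₁. -/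
open MvPolynomial

theorem stmt14 (a b ν : ℂ) (w : Fin 4 → ℂ) (h1 : w 1 ≠ 0) (h2 : w 2 ≠ 0) :
    (∑ j : Fin 4, PivPi ν w 1 j *
        MvPolynomial.eval w (MvPolynomial.pderiv j (K1poly a b ν)))
      = w 1 * (w 2 - w 0) ∧
    (∑ j : Fin 4, PivPi ν w 2 j *
        MvPolynomial.eval w (MvPolynomial.pderiv j (K1poly a b ν)))
      = w 2 * (w 3 - w 1) := by
  have d0 : MvPolynomial.eval w (MvPolynomial.pderiv 0 (K1poly a b ν))
      = w 1 * w 2 * (w 1 - w 3) := by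
    simp [K1poly, pderiv_X, Pi.single_apply, Derivation.leibniz_pow]
  have d3 : MvPolynomial.eval w (MvPolynomial.pderiv 3 (K1poly a b ν))
      = w 1 * w 2 * (w 2 - w 0) := by
    simp [K1poly, pderiv_X, Pi.single_apply, Derivation.leibniz_pow]
  constructor
  · rw [Fin.sum_univ_four, d3]
    simp [PivPi]
    field_simp
  · rw [Fin.sum_univ_four, d0]
    simp [PivPi]
    field_simp
    ring
end

section
/- Let c₁ ∈ ℂ and let p_n, q_n, r_n, ρ_n : ℝ → ℂ (n ∈ ℤ) be differentiable functions, and set w_n := −r_n/2. Suppose that for all n ∈ ℤ and all t ∈ ℝ: (a) 2(p_n(t) + r_n(t)) = c₁; (b) p_{n+1}(t) = q_n(t) − p_n(t); (c) ρ_n(t) = −w_n(t)·q_{n−1}(t); (d) p_n'(t) = ρ_n(t) − (1/2)·r_n(t)·q_n(t). Then the sequence (w_n) is a solution of the infinite Volterra lattice: w_n'(t) = w_n(t)·(w_{n+1}(t) − w_{n−1}(t)) for all n ∈ ℤ and t ∈ ℝ. -/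
theorem stmt15 (c1 : ℂ) (p q r ρ : ℤ → ℝ → ℂ)
    (hdp : ∀ n : ℤ, Differentiable ℝ (p n))
    (hdq : ∀ n : ℤ, Differentiable ℝ (q n))
    (hdr : ∀ n : ℤ, Differentiable ℝ (r n))
    (hdρ : ∀ n : ℤ, Differentiable ℝ (ρ n))
    (w : ℤ → ℝ → ℂ) (hwdef : ∀ n : ℤ, ∀ t : ℝ, w n t = -(r n t) / 2)
    -- (a)  H₁ = 2(p_n + r_n) is constant, equal to c₁
    (ha : ∀ n : ℤ, ∀ t : ℝ, 2 * (p n t + r n t) = c1)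
    -- (b)  p_{n+1} = q_n − p_n
    (hb : ∀ n : ℤ, ∀ t : ℝ, p (n + 1) t = q n t - p n t)
    -- (c)  ρ_n = −w_n·q_{n−1}
    (hc : ∀ n : ℤ, ∀ t : ℝ, ρ n t = -(w n t) * q (n - 1) t)
    -- (d)  ṗ_n = ρ_n − (1/2)·r_n·q_n
    (hd : ∀ n : ℤ, ∀ t : ℝ, deriv (p n) t = ρ n t - (1 / 2) * r n t * q n t) :
    -- then (w_n) solves the infinite Volterra lattice
    ∀ n : ℤ, ∀ t : ℝ, deriv (w n) t = w n t * (w (n + 1) t - w (n - 1) t) := by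
  intro n t
  have hw : ∀ m : ℤ, ∀ s : ℝ, w m s = (p m s - c1 / 2) / 2 := by
    intro m s
    rw [hwdef, ← ha m s]
    ring
  have hfun : w n = fun s => (p n s - c1 / 2) / 2 := funext (hw n)
  have hder : deriv (w n) t = deriv (p n) t / 2 := by
    rw [hfun]
    exact (((hdp n t).hasDerivAt.sub_const (c1 / 2)).div_const 2).deriv
  have h1 := hb n t
  have h2 := hb (n - 1) t
  rw [sub_add_cancel] at h2
  have hr : r n t = -2 * w n t := by
    rw [hwdef]
    ring
  have hq : q n t = p (n + 1) t + p n t := by rw [h1]; ring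
  have hq' : q (n - 1) t = p n t + p (n - 1) t := by rw [h2]; ring
  rw [hder, hd, hc, hr, hq, hq', hw (n + 1), hw (n - 1)]
  ring
end

section
/- Let w_n : ℝ → ℂ (n ∈ ℤ) be differentiable functions satisfying the infinite Volterra lattice w_n'(t) = w_n(t)(w_{n+1}(t) − w_{n−1}(t)) for all n ∈ ℤ and t ∈ ℝ. Define a_{j+1} := w_{2j−1}·w_{2j} and b_{j+1} := −w_{2j} − w_{2j+1} for j ∈ ℤ. Then (a_n, b_n) is a solution of the infinite Toda lattice: a_n'(t) = a_n(t)(b_{n−1}(t) − b_n(t)) and b_n'(t) = a_n(t) − a_{n+1}(t) for all n ∈ ℤ, t ∈ ℝ. Likewise, a*_{j+1} := w_{2j}·w_{2j+1} and b*_{j+1} := −w_{2j+1} − w_{2j+2} define another solution of the infinite Toda lattice. -/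
theorem stmt16 (w : ℤ → ℝ → ℂ)
    (hdiff : ∀ n : ℤ, Differentiable ℝ (w n))
    -- the infinite Volterra lattice
    (hV : ∀ n : ℤ, ∀ t : ℝ, deriv (w n) t = w n t * (w (n + 1) t - w (n - 1) t))
    (A B As Bs : ℤ → ℝ → ℂ)
    -- a_{j+1} := w_{2j−1}·w_{2j},  b_{j+1} := −w_{2j} − w_{2j+1}
    (hA : ∀ j : ℤ, ∀ t : ℝ, A (j + 1) t = w (2 * j - 1) t * w (2 * j) t)
    (hB : ∀ j : ℤ, ∀ t : ℝ, B (j + 1) t = -(w (2 * j) t) - w (2 * j + 1) t)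
    -- a*_{j+1} := w_{2j}·w_{2j+1},  b*_{j+1} := −w_{2j+1} − w_{2j+2}
    (hAs : ∀ j : ℤ, ∀ t : ℝ, As (j + 1) t = w (2 * j) t * w (2 * j + 1) t)
    (hBs : ∀ j : ℤ, ∀ t : ℝ, Bs (j + 1) t = -(w (2 * j + 1) t) - w (2 * j + 2) t) :
    -- (a_n, b_n) solves the infinite Toda lattice
    (∀ n : ℤ, ∀ t : ℝ, deriv (A n) t = A n t * (B (n - 1) t - B n t)) ∧
    (∀ n : ℤ, ∀ t : ℝ, deriv (B n) t = A n t - A (n + 1) t) ∧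
    -- and so does (a*_n, b*_n)
    (∀ n : ℤ, ∀ t : ℝ, deriv (As n) t = As n t * (Bs (n - 1) t - Bs n t)) ∧
    (∀ n : ℤ, ∀ t : ℝ, deriv (Bs n) t = As n t - As (n + 1) t) := by
  have hp : ∀ (m k : ℤ) (t : ℝ), deriv (fun s => w m s * w k s) t =
      w m t * (w (m + 1) t - w (m - 1) t) * w k t
        + w m t * (w k t * (w (k + 1) t - w (k - 1) t)) := by
    intro m k t
    rw [← hV m t, ← hV k t]
    exact ((hdiff m t).hasDerivAt.mul (hdiff k t).hasDerivAt).deriv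
  have hs : ∀ (m k : ℤ) (t : ℝ), deriv (fun s => -(w m s) - w k s) t =
      -(w m t * (w (m + 1) t - w (m - 1) t)) - w k t * (w (k + 1) t - w (k - 1) t) := by
    intro m k t
    rw [← hV m t, ← hV k t]
    exact ((hdiff m t).hasDerivAt.neg.sub (hdiff k t).hasDerivAt).deriv
  refine ⟨?_, ?_, ?_, ?_⟩ <;> intro n t <;> obtain ⟨j, rfl⟩ : ∃ j, n = j + 1 := ⟨n - 1, by ring⟩
  · have h1 := hB (j - 1) t
    rw [funext (hA j), hp, add_sub_cancel_right, hB j]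
    rw [show j - 1 + 1 = j by ring, show 2 * (j - 1) + 1 = 2 * j - 1 by ring,
      show 2 * (j - 1) = 2 * j - 2 by ring] at h1
    rw [h1, show 2 * j - 1 + 1 = 2 * j by ring, show 2 * j - 1 - 1 = 2 * j - 2 by ring]
    ring
  · rw [funext (hB j), hs, hA j, hA (j + 1), show 2 * (j + 1) - 1 = 2 * j + 1 by ring,
      show 2 * (j + 1) = 2 * j + 1 + 1 by ring, show 2 * j + 1 - 1 = 2 * j by ring]
    ring
  · have h1 := hBs (j - 1) t
    rw [funext (hAs j), hp, show j + 1 - 1 = j by ring, hBs j]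
    rw [show j - 1 + 1 = j by ring, show 2 * (j - 1) + 1 = 2 * j - 1 by ring,
      show 2 * (j - 1) + 2 = 2 * j by ring] at h1
    rw [h1, show 2 * j + 1 + 1 = 2 * j + 2 by ring, show 2 * j + 1 - 1 = 2 * j by ring]
    ring
  · rw [funext (hBs j), hs, hAs j, hAs (j + 1), show 2 * (j + 1) = 2 * j + 2 by ring,
      show 2 * j + 1 + 1 = 2 * j + 2 by ring, show 2 * j + 1 - 1 = 2 * j by ring,
      show 2 * j + 2 - 1 = 2 * j + 1 by ring]
    ring
end

section
/- Let a, b, ν ∈ ℂ and let w : ℤ → ℂ with w_n ≠ 0 for all n, satisfying the (P.iv) recurrence for all n ∈ ℤ. Then for all n ∈ ℤ the fifth-order relation w_{n+4}(w_{n+2} + w_{n+3} + w_{n+4} + w_{n+5} + ν) + a/w_{n+3} = w_{n+1}(w_n + w_{n+1} + w_{n+2} + w_{n+3} + ν) + a/w_{n+2} holds (this is the relation obtained by eliminating the parameter b from (P.iv)). -/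
theorem stmt18 (a b ν : ℂ) (w : ℤ → ℂ) (hw0 : ∀ n : ℤ, w n ≠ 0)
    (hpiv : ∀ n : ℤ,
      w (n + 4) * w (n + 3) * w (n + 2) + w (n + 2) * w (n + 1) * w n
        + 2 * w (n + 2) ^ 2 * (w (n + 3) + w (n + 1))
        + w (n + 2) * (w (n + 3) ^ 2 + w (n + 3) * w (n + 1) + w (n + 1) ^ 2)
        + w (n + 2) ^ 3
        + ν * w (n + 2) * (w (n + 3) + w (n + 2) + w (n + 1))
        + b * w (n + 2) + a = 0) :
    ∀ n : ℤ,
      w (n + 4) * (w (n + 2) + w (n + 3) + w (n + 4) + w (n + 5) + ν) + a / w (n + 3)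
        = w (n + 1) * (w n + w (n + 1) + w (n + 2) + w (n + 3) + ν) + a / w (n + 2) := by
  intro n
  have h1 := hpiv n
  have h2 := hpiv (n + 1)
  have e1 : n + 1 + 4 = n + 5 := by ring
  have e2 : n + 1 + 3 = n + 4 := by ring
  have e3 : n + 1 + 2 = n + 3 := by ring
  have e4 : n + 1 + 1 = n + 2 := by ring
  rw [e1, e2, e3, e4] at h2
  have d2 : a / w (n + 2) * w (n + 2) = a := div_mul_cancel₀ a (hw0 (n + 2))
  have d3 : a / w (n + 3) * w (n + 3) = a := div_mul_cancel₀ a (hw0 (n + 3))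
  apply mul_right_cancel₀ (mul_ne_zero (hw0 (n + 2)) (hw0 (n + 3)))
  linear_combination w (n + 2) * h2 - w (n + 3) * h1 + w (n + 2) * d3 - w (n + 3) * d2
end

section
/- On ℂ⁴ with coordinates z = (p₁, q₁, r₁, r₂), consider the two antisymmetric 4×4 matrices of polynomial entries J^x(z) := [[0, −q₁, 0, r₂],[q₁, 0, −q₁, 0],[0, q₁, 0, −r₂],[−r₂, 0, r₂, 0]] and J^{x²}(z) := [[0, 2, 0, −r₁],[−2, 0, 2, 2p₁ − q₁],[0, −2, 0, r₁],[r₁, q₁ − 2p₁, −r₁, 0]], and the polynomials H₁ := 2(p₁ + r₁), H₂ := p₁² + q₁r₁ + 2r₂, H₃ := q₁r₂. Then: (i) both J^x and J^{x²} satisfy the Jacobi identity, i.e. for all indices i, j, k: Σ_l ( J_{il} ∂_l J_{jk} + J_{jl} ∂_l J_{ki} + J_{kl} ∂_l J_{ij} ) = 0 identically in z; (ii) H₁ is a Casimir of both structures: J^x(z)·∇H₁(z) = 0 and J^{x²}(z)·∇H₁(z) = 0 for all z; (iii) H₃ is a Casimir of J^x: J^x(z)·∇H₃(z) = 0 for all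 z; (iv) H₂ is a Casimir of J^{x²}: J^{x²}(z)·∇H₂(z) = 0 for all z. -/
open MvPolynomial

/-- The structure matrix `J^x` of the genus-1 bracket `{·,·}^x`, with polynomial entries in
the coordinates `z = (p₁, q₁, r₁, r₂)` (here `X 0 = p₁`, `X 1 = q₁`, `X 2 = r₁`, `X 3 = r₂`). -/
noncomputable def Jx : Matrix (Fin 4) (Fin 4) (MvPolynomial (Fin 4) ℂ) :=
  !![0, -X 1, 0, X 3;
     X 1, 0, -X 1, 0;
     0, X 1, 0, -X 3;
     -X 3, 0, X 3, 0]

/-- The structure matrix `J^{x²}` of the genus-1 bracket `{·,·}^{x²}`. -/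
noncomputable def Jx2 : Matrix (Fin 4) (Fin 4) (MvPolynomial (Fin 4) ℂ) :=
  !![0, 2, 0, -X 2;
     -2, 0, 2, 2 * X 0 - X 1;
     0, -2, 0, X 2;
     X 2, X 1 - 2 * X 0, -X 2, 0]

/-- `H₁ = 2(p₁ + r₁)`. -/
noncomputable def H1 : MvPolynomial (Fin 4) ℂ := 2 * (X 0 + X 2)

/-- `H₂ = p₁² + q₁r₁ + 2r₂`. -/
noncomputable def H2 : MvPolynomial (Fin 4) ℂ := X 0 ^ 2 + X 1 * X 2 + 2 * X 3

/-- `H₃ = q₁r₂`. -/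
noncomputable def H3 : MvPolynomial (Fin 4) ℂ := X 1 * X 3

theorem stmt19 :
    -- (i) both J^x and J^{x²} satisfy the Jacobi identity, identically in z
    (∀ i j k : Fin 4,
      ∑ l : Fin 4, (Jx i l * pderiv l (Jx j k)
        + Jx j l * pderiv l (Jx k i)
        + Jx k l * pderiv l (Jx i j)) = 0) ∧
    (∀ i j k : Fin 4,
      ∑ l : Fin 4, (Jx2 i l * pderiv l (Jx2 j k)
        + Jx2 j l * pderiv l (Jx2 k i)
        + Jx2 k l * pderiv l (Jx2 i j)) = 0) ∧
    -- (ii) H₁ is a Casimir of both structures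
    (∀ i : Fin 4, ∑ l : Fin 4, Jx i l * pderiv l H1 = 0) ∧
    (∀ i : Fin 4, ∑ l : Fin 4, Jx2 i l * pderiv l H1 = 0) ∧
    -- (iii) H₃ is a Casimir of J^x
    (∀ i : Fin 4, ∑ l : Fin 4, Jx i l * pderiv l H3 = 0) ∧
    -- (iv) H₂ is a Casimir of J^{x²}
    (∀ i : Fin 4, ∑ l : Fin 4, Jx2 i l * pderiv l H2 = 0) := by
  have h2 : ∀ l : Fin 4, pderiv l (2 : MvPolynomial (Fin 4) ℂ) = 0 := by
    intro l
    have : (2 : MvPolynomial (Fin 4) ℂ) = C 2 := (map_ofNat C 2).symm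
    rw [this, pderiv_C]
  refine ⟨?_, ?_, ?_, ?_, ?_, ?_⟩
  · intro i j k
    fin_cases i <;> fin_cases j <;> fin_cases k <;>
      simp [Jx, Fin.sum_univ_four, pderiv_X, Pi.single_apply, h2]
  · intro i j k
    fin_cases i <;> fin_cases j <;> fin_cases k <;>
      simp [Jx2, Fin.sum_univ_four, pderiv_X, Pi.single_apply, h2] <;> ring
  all_goals
    intro i
    fin_cases i <;>
      simp [Jx, Jx2, H1, H2, H3, Fin.sum_univ_four, pderiv_X, Pi.single_apply, h2] <;> ring
end
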